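/- arXiv:math/9803047 — 7 statements merged into one kernel-verified Lean document; each statement's English description precedes it below -/
import Mathlib

section
/- Let r ≥ 1 and let M be an r×r real symmetric matrix that is negative definite and satisfies M i j ≥ 0 for all i ≠ j. Let c ∈ ℝ^r satisfy c i ≥ 0 for all i. Let I be a nonempty subset of Fin r, let M_I be the principal submatrix of M on the rows and columns in I, and let c_I be the restriction of c to I. Then (both M and M_I being invertible since they are negative definite) -c_Iᵀ (M_I)⁻¹ c_I ≤ -cᵀ M⁻¹ c. -/
open Matrix

/-- The form `cᵀ P⁻¹ c` of a positive definite matrix `P` does not increase under compression: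
replacing `P` by `Eᵀ P E` and `c` by `Eᵀ c` makes it smaller or equal. -/
theorem Matrix.PosDef.dotProduct_inv_mulVec_compression_le {m n : Type*} [Fintype m] [Fintype n]
    [DecidableEq m] [DecidableEq n] {P : Matrix n n ℝ} (hP : P.PosDef) {E : Matrix n m ℝ}
    (hE : (Eᵀ * P * E).PosDef) (c : n → ℝ) :
    (Eᵀ *ᵥ c) ⬝ᵥ ((Eᵀ * P * E)⁻¹ *ᵥ (Eᵀ *ᵥ c)) ≤ c ⬝ᵥ (P⁻¹ *ᵥ c) := by
  set y := P⁻¹ *ᵥ c with hy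
  set w := (Eᵀ * P * E)⁻¹ *ᵥ (Eᵀ *ᵥ c) with hw
  have hPy : P *ᵥ y = c := by
    rw [hy, mulVec_mulVec, mul_nonsing_inv _ ((isUnit_iff_isUnit_det _).1 hP.isUnit), one_mulVec]
  have hEw : (Eᵀ * P * E) *ᵥ w = Eᵀ *ᵥ c := by
    rw [hw, mulVec_mulVec, mul_nonsing_inv _ ((isUnit_iff_isUnit_det _).1 hE.isUnit), one_mulVec]
  have hadj (v : n → ℝ) : (E *ᵥ w) ⬝ᵥ v = w ⬝ᵥ (Eᵀ *ᵥ v) := by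
    rw [dotProduct_mulVec, vecMul_transpose]
  have hww : (E *ᵥ w) ⬝ᵥ (P *ᵥ (E *ᵥ w)) = w ⬝ᵥ (Eᵀ *ᵥ c) := by
    rw [hadj, mulVec_mulVec, mulVec_mulVec, hEw]
  have hyw : y ⬝ᵥ (P *ᵥ (E *ᵥ w)) = w ⬝ᵥ (Eᵀ *ᵥ c) := by
    have hPt : Pᵀ = P := by simpa using hP.isHermitian.eq
    rw [dotProduct_mulVec, ← mulVec_transpose, hPt, hPy, dotProduct_comm, hadj]
  have hnonneg := hP.posSemidef.dotProduct_mulVec_nonneg (y - E *ᵥ w)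
  simp only [star_trivial, mulVec_sub, hPy, dotProduct_sub, sub_dotProduct, hww, hyw, hadj]
    at hnonneg
  rw [dotProduct_comm _ w, dotProduct_comm c y]
  linarith

/-- The form `cᵀ P⁻¹ c` of a positive definite matrix does not increase on passing to a
principal submatrix. -/
theorem Matrix.PosDef.dotProduct_inv_mulVec_submatrix_le {m n : Type*} [Fintype m] [Fintype n]
    [DecidableEq m] [DecidableEq n] {P : Matrix n n ℝ} (hP : P.PosDef) {f : m → n}
    (hf : Function.Injective f) (c : n → ℝ) :
    (c ∘ f) ⬝ᵥ ((P.submatrix f f)⁻¹ *ᵥ (c ∘ f)) ≤ c ⬝ᵥ (P⁻¹ *ᵥ c) := by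
  set E : Matrix n m ℝ := (1 : Matrix n n ℝ).submatrix id f with hE
  have hPE : Eᵀ * P * E = P.submatrix f f := by
    ext i j
    simp [hE, mul_apply, one_apply]
  have hcE : Eᵀ *ᵥ c = c ∘ f := by
    ext i
    simp [hE, mulVec, dotProduct, one_apply]
  have hpos : (Eᵀ * P * E).PosDef := hPE ▸ hP.submatrix hf
  rw [← hPE, ← hcE]
  exact hP.dotProduct_inv_mulVec_compression_le hpos c

theorem Matrix.nonsing_inv_neg {n R : Type*} [Fintype n] [DecidableEq n] [CommRing R]
    (A : Matrix n n R) : (-A)⁻¹ = -A⁻¹ := by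
  by_cases h : IsUnit A.det
  · simpa using inv_smul' A (-1 : Rˣ) h
  · have hneg : ¬IsUnit (-A).det := by
      simpa [← isUnit_iff_isUnit_det] using h
    rw [nonsing_inv_apply_not_isUnit _ h, nonsing_inv_apply_not_isUnit _ hneg, neg_zero]

/-- **Proposition 1.2 (matrix form).** For a negative definite symmetric real matrix `M`
with nonnegative off-diagonal entries and a nonnegative vector `c`, restricting to a
nonempty principal submatrix does not increase `-cᵀ M⁻¹ c`. -/
theorem negK2_submatrix_le (r : ℕ) (hr : 1 ≤ r)
    (M : Matrix (Fin r) (Fin r) ℝ) (hsymm : M.IsSymm)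
    (hnegdef : ∀ x : Fin r → ℝ, x ≠ 0 → x ⬝ᵥ (M *ᵥ x) < 0)
    (hoffdiag : ∀ i j : Fin r, i ≠ j → 0 ≤ M i j)
    (c : Fin r → ℝ) (hc : ∀ i, 0 ≤ c i)
    (I : Finset (Fin r)) (hI : I.Nonempty) :
    - ((fun x : {i // i ∈ I} => c x.1) ⬝ᵥ
        ((M.submatrix (fun x : {i // i ∈ I} => x.1) (fun x : {i // i ∈ I} => x.1))⁻¹ *ᵥ
          (fun x : {i // i ∈ I} => c x.1)))
      ≤ - (c ⬝ᵥ (M⁻¹ *ᵥ c)) := by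
  have hP : (-M).PosDef := by
    refine .of_dotProduct_mulVec_pos (by simpa [IsHermitian] using hsymm.eq) fun x hx => ?_
    simpa [neg_mulVec] using hnegdef x hx
  simpa [Matrix.nonsing_inv_neg, neg_mulVec, submatrix_neg, Function.comp_def] using
    hP.dotProduct_inv_mulVec_submatrix_le (f := fun x : {i // i ∈ I} => x.1)
      Subtype.val_injective c
end

section
/- Let r ≥ 1 and let M be an r×r real symmetric matrix that is negative definite and satisfies M i j ≥ 0 for all i ≠ j. Let c ∈ ℝ^r satisfy c i ≥ 0 for all i. Then every entry of the vector M⁻¹ c is ≤ 0. -/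
open Matrix

/-- A real matrix whose quadratic form is negative definite is invertible. -/
lemma Matrix.isUnit_det_of_dotProduct_mulVec_neg {n : Type*} [Fintype n] [DecidableEq n]
    {M : Matrix n n ℝ} (hM : ∀ x : n → ℝ, x ≠ 0 → x ⬝ᵥ (M *ᵥ x) < 0) : IsUnit M.det := by
  rw [isUnit_iff_ne_zero]
  intro hdet
  obtain ⟨v, hv, hMv⟩ := exists_mulVec_eq_zero_iff.mpr hdet
  simpa [hMv] using hM v hv

/-- If the off-diagonal entries of `M` are nonnegative, then the positive and negative parts of
any vector pair nonnegatively under `M`. -/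
lemma Matrix.posPart_dotProduct_mulVec_negPart_nonneg {n : Type*} [Fintype n]
    {M : Matrix n n ℝ} (hM : ∀ i j, i ≠ j → 0 ≤ M i j) (x : n → ℝ) :
    0 ≤ x⁺ ⬝ᵥ (M *ᵥ x⁻) := by
  simp only [dotProduct, mulVec, Finset.mul_sum]
  refine Finset.sum_nonneg fun i _ => Finset.sum_nonneg fun j _ => ?_
  obtain rfl | hij := eq_or_ne i j
  · rcases le_total (x i) 0 with hx | hx
    · simp [posPart_eq_zero.mpr hx]
    · simp [negPart_eq_zero.mpr hx]
  · exact mul_nonneg (posPart_nonneg x i) (mul_nonneg (hM i j hij) (negPart_nonneg x j))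

/-- Maximum principle: if `M` is negative definite with nonnegative off-diagonal entries and
`M *ᵥ x` is nonnegative, then `x` is nonpositive. -/
lemma Matrix.nonpos_of_mulVec_nonneg {n : Type*} [Fintype n] {M : Matrix n n ℝ}
    (hM : ∀ x : n → ℝ, x ≠ 0 → x ⬝ᵥ (M *ᵥ x) < 0) (hoff : ∀ i j, i ≠ j → 0 ≤ M i j)
    {x : n → ℝ} (hx : 0 ≤ M *ᵥ x) : x ≤ 0 := by
  rw [← posPart_eq_zero]
  by_contra hpos
  have hsplit : x⁺ ⬝ᵥ (M *ᵥ x⁺) = x⁺ ⬝ᵥ (M *ᵥ x) + x⁺ ⬝ᵥ (M *ᵥ x⁻) := by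
    rw [← dotProduct_add, ← mulVec_add]
    congr 2
    exact sub_eq_iff_eq_add.mp (posPart_sub_negPart x)
  have hpair : 0 ≤ x⁺ ⬝ᵥ (M *ᵥ x) := dotProduct_nonneg_of_nonneg (posPart_nonneg x) hx
  linarith [hM _ hpos, posPart_dotProduct_mulVec_negPart_nonneg hoff x]

/-- **Lemma 1.8(i) (general form).** If `M` is a symmetric negative definite real matrix with
nonnegative off-diagonal entries and `c` is a vector with nonnegative entries, then every entry
of `M⁻¹ c` is nonpositive. -/
theorem inv_mulVec_nonpos (r : ℕ) (hr : 1 ≤ r)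
    (M : Matrix (Fin r) (Fin r) ℝ) (hsymm : M.IsSymm)
    (hnegdef : ∀ x : Fin r → ℝ, x ≠ 0 → x ⬝ᵥ (M *ᵥ x) < 0)
    (hoffdiag : ∀ i j : Fin r, i ≠ j → 0 ≤ M i j)
    (c : Fin r → ℝ) (hc : ∀ i, 0 ≤ c i) :
    ∀ i : Fin r, (M⁻¹ *ᵥ c) i ≤ 0 := by
  refine nonpos_of_mulVec_nonneg hnegdef hoffdiag ?_
  rw [mulVec_mulVec, mul_nonsing_inv M (isUnit_det_of_dotProduct_mulVec_neg hnegdef), one_mulVec]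
  exact hc
end

section
/- Let (M, p) be a resolution datum of size r with c ≠ 0 (i.e., not every index i has p i = 0 and M i i = -2). Then -cᵀ M⁻¹ c ≥ 1/3, and equality holds if and only if r = 1, M = (-3) and p = 0. -/
open Matrix

structure ResolutionDatum (r : ℕ) where
  M : Matrix (Fin r) (Fin r) ℤ
  p : Fin r → ℕ
  symm : M.IsSymm
  negdef : ∀ x : Fin r → ℝ, x ≠ 0 → x ⬝ᵥ ((M.map (Int.cast : ℤ → ℝ)) *ᵥ x) < 0
  offdiag_nonneg : ∀ i j : Fin r, i ≠ j → 0 ≤ M i j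
  diag_le_neg_two : ∀ i : Fin r, p i = 0 → M i i ≤ -2
  connected : (SimpleGraph.fromRel (fun i j : Fin r => 0 < M i j)).Connected

/-- The vector `c i = 2 p i - 2 - M i i` (the values `K · A_i`). -/
def ResolutionDatum.c {r : ℕ} (D : ResolutionDatum r) : Fin r → ℚ :=
  fun i => 2 * (D.p i : ℚ) - 2 - (D.M i i : ℚ)

/-- `-K² = -cᵀ M⁻¹ c`. -/
noncomputable def ResolutionDatum.negK2 {r : ℕ} (D : ResolutionDatum r) : ℚ :=
  - (D.c ⬝ᵥ ((D.M.map (Int.cast : ℤ → ℚ))⁻¹ *ᵥ D.c))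

/-- The set of all values `-K²` of normal surface singularities. -/
def negK2Set : Set ℝ :=
  { x : ℝ | ∃ (r : ℕ) (_ : 0 < r) (D : ResolutionDatum r), x = (D.negK2 : ℝ) }

namespace ResolutionDatum

variable {r : ℕ} (D : ResolutionDatum r)

lemma dotProduct_mulVec_neg (x : Fin r → ℚ) (hx : x ≠ 0) :
    x ⬝ᵥ ((D.M.map (Int.cast : ℤ → ℚ)) *ᵥ x) < 0 := by
  have hne : (fun i => (x i : ℝ)) ≠ 0 := fun h => hx <| funext fun i => by
    simpa using congrFun h i
  have h := D.negdef _ hne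
  simp only [dotProduct, mulVec, Matrix.map_apply] at h ⊢
  exact_mod_cast h

lemma det_ne_zero : (D.M.map (Int.cast : ℤ → ℚ)).det ≠ 0 := by
  intro h
  obtain ⟨v, hv, hMv⟩ := Matrix.exists_mulVec_eq_zero_iff.mpr h
  simpa [hMv] using D.dotProduct_mulVec_neg v hv

lemma diag_neg (i : Fin r) : D.M i i < 0 := by
  have h := D.dotProduct_mulVec_neg (Pi.single i 1) (by simp)
  simpa using h

lemma c_nonneg (i : Fin r) : 0 ≤ D.c i := by
  have hneg := D.diag_neg i
  have h : 0 ≤ 2 * (D.p i : ℤ) - 2 - D.M i i := by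
    by_cases hp : D.p i = 0
    · have := D.diag_le_neg_two i hp
      omega
    · omega
  unfold c
  exact_mod_cast h

/-- The numerical canonical cycle `Z = -M⁻¹ c`, i.e. the solution of `M Z = -c`. -/
noncomputable def canonicalCycle : Fin r → ℚ :=
  -((D.M.map (Int.cast : ℤ → ℚ))⁻¹ *ᵥ D.c)

lemma mulVec_canonicalCycle :
    (D.M.map (Int.cast : ℤ → ℚ)) *ᵥ D.canonicalCycle = -D.c := by
  rw [canonicalCycle, mulVec_neg, mulVec_mulVec,
    mul_nonsing_inv _ (isUnit_iff_ne_zero.mpr D.det_ne_zero), one_mulVec]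

lemma negK2_eq_dotProduct : D.negK2 = D.c ⬝ᵥ D.canonicalCycle := by
  simp [negK2, canonicalCycle]

/-- Completing the square along the `i`-th basis vector. -/
lemma dotProduct_mulVec_sub_single (i : Fin r) (t : ℚ) :
    (D.canonicalCycle - Pi.single i t) ⬝ᵥ
        ((D.M.map (Int.cast : ℤ → ℚ)) *ᵥ (D.canonicalCycle - Pi.single i t)) =
      -D.negK2 + 2 * t * D.c i + t ^ 2 * D.M i i := by
  have hsymm : (D.M.map (Int.cast : ℤ → ℚ))ᵀ = D.M.map (Int.cast : ℤ → ℚ) := by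
    rw [← transpose_map, D.symm]
  have hcross : D.canonicalCycle ⬝ᵥ ((D.M.map (Int.cast : ℤ → ℚ)) *ᵥ Pi.single i t) =
      -(D.c i * t) := by
    rw [dotProduct_mulVec, ← mulVec_transpose, hsymm, mulVec_canonicalCycle]
    simp
  rw [mulVec_sub, sub_dotProduct, dotProduct_sub, dotProduct_sub, hcross,
    mulVec_canonicalCycle, negK2_eq_dotProduct, dotProduct_neg, dotProduct_comm D.c]
  simp
  ring

lemma two_mul_add_le_negK2 (i : Fin r) (t : ℚ) :
    2 * t * D.c i + t ^ 2 * D.M i i ≤ D.negK2 := by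
  have h := D.dotProduct_mulVec_sub_single i t
  by_cases hz : D.canonicalCycle - Pi.single i t = 0
  · simp only [hz, zero_dotProduct] at h
    linarith
  · linarith [D.dotProduct_mulVec_neg _ hz]

lemma canonicalCycle_eq_single {i : Fin r} {t : ℚ}
    (h : D.negK2 = 2 * t * D.c i + t ^ 2 * D.M i i) : D.canonicalCycle = Pi.single i t := by
  by_contra hne
  have hneg := D.dotProduct_mulVec_neg _ (sub_ne_zero.mpr hne)
  linarith [D.dotProduct_mulVec_sub_single i t]

/-- If the canonical cycle is a positive multiple of a single curve, then there is only one
curve. -/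
lemma subsingleton_of_canonicalCycle_eq_single {i : Fin r} {t : ℚ} (ht : 0 < t)
    (h : D.canonicalCycle = Pi.single i t) : Subsingleton (Fin r) := by
  by_contra hns
  rw [not_subsingleton_iff_nontrivial] at hns
  obtain ⟨j, hj⟩ := D.connected.preconnected.exists_adj_of_nontrivial i
  rw [SimpleGraph.fromRel_adj, ← D.symm.apply i j, or_self] at hj
  have hcj := congrFun D.mulVec_canonicalCycle j
  simp [h] at hcj
  have hM : (0 : ℚ) < D.M j i := by exact_mod_cast hj.2
  nlinarith [D.c_nonneg j, mul_pos hM ht]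

/-- A curve with `c i ≠ 0` that is not a rational `(-3)`-curve forces `-K² > 1/3`. -/
lemma one_third_lt_negK2 {i : Fin r} (hi : D.c i ≠ 0) (h : ¬(D.p i = 0 ∧ D.M i i = -3)) :
    1 / 3 < D.negK2 := by
  have hneg := D.diag_neg i
  have hle := D.diag_le_neg_two i
  have hb : (D.M i i : ℚ) ≤ -1 := by exact_mod_cast (show D.M i i ≤ -1 by omega)
  by_cases hp : D.p i = 0
  · have hne : D.M i i ≠ -2 := fun h2 => hi (by simp [c, hp, h2])
    have hb4 : (D.M i i : ℚ) ≤ -4 := by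
      have := hle hp
      exact_mod_cast (show D.M i i ≤ -4 by omega)
    have := D.two_mul_add_le_negK2 i (1 / 2)
    simp only [c, hp, Nat.cast_zero] at this
    linarith
  · have hp1 : (1 : ℚ) ≤ D.p i := by exact_mod_cast Nat.one_le_iff_ne_zero.mpr hp
    have := D.two_mul_add_le_negK2 i 1
    simp only [c] at this
    linarith

end ResolutionDatum

/-- **Theorem 1.4.** For a normal surface singularity which is not a rational double point
(i.e. `c ≠ 0`), one has `-K² ≥ 1/3`, with equality iff the singularity is the cyclic
quotient singularity `X_{3,1}` (one exceptional rational curve of self-intersection `-3`). -/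
theorem negK2_lower_bound (r : ℕ) (hr : 0 < r) (D : ResolutionDatum r)
    (hc : D.c ≠ 0) :
    (1 : ℚ) / 3 ≤ D.negK2 ∧
      (D.negK2 = 1 / 3 ↔ r = 1 ∧ (∀ i j : Fin r, D.M i j = -3) ∧ ∀ i : Fin r, D.p i = 0) := by
  obtain ⟨i, hi⟩ := Function.ne_iff.mp hc
  have hsquare (h : D.p i = 0 ∧ D.M i i = -3) :
      2 * (1 / 3) * D.c i + (1 / 3) ^ 2 * D.M i i = 1 / 3 := by
    norm_num [ResolutionDatum.c, h.1, h.2]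
  refine ⟨?_, fun heq => ?_, ?_⟩
  · by_cases h : D.p i = 0 ∧ D.M i i = -3
    · exact (hsquare h).symm.le.trans (D.two_mul_add_le_negK2 i _)
    · exact (D.one_third_lt_negK2 hi h).le
  · by_cases h : D.p i = 0 ∧ D.M i i = -3
    · have hsub := D.subsingleton_of_canonicalCycle_eq_single (by norm_num)
        (D.canonicalCycle_eq_single (heq.trans (hsquare h).symm))
      have hr1 : r ≤ 1 := Fin.subsingleton_iff_le_one.mp hsub
      refine ⟨by omega, fun j k => ?_, fun j => ?_⟩
      · rw [Subsingleton.elim j i, Subsingleton.elim k i, h.2]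
      · rw [Subsingleton.elim j i, h.1]
    · exact absurd heq (D.one_third_lt_negK2 hi h).ne'
  · rintro ⟨rfl, hM, hp⟩
    have hcycle := congrFun D.mulVec_canonicalCycle 0
    simp [mulVec, dotProduct, hM, hp, ResolutionDatum.c] at hcycle
    rw [D.negK2_eq_dotProduct]
    simp [dotProduct, hM, hp, ResolutionDatum.c]
    linarith
end

section
/- Let r ≥ 2 and n ≥ 1 be integers. Let M be an r×r real symmetric matrix with M 1 1 = M 2 2 = -2 and M 1 2 = M 2 1 = 1. Define the (r+n)×(r+n) real symmetric matrix M' by: M' i j = M i j for 1 ≤ i, j ≤ r except M' 1 2 = M' 2 1 = 0; M' (r+a) (r+a) = -2 for 1 ≤ a ≤ n; M' (r+a) (r+a+1) = M' (r+a+1) (r+a) = 1 for 1 ≤ a ≤ n-1; M' 1 (r+1) = M' (r+1) 1 = 1; M' 2 (r+n) = M' (r+n) 2 = 1; and all other entries involving an index > r are 0. Let F be the n×n block of M' on the last n indices and B the r×n block of M' coupling the first r indices to the last n. Then F is invertible, and the Schur complement M - with its (1,1),(2,2) entries and (1,2),(2,1) entries - namely M'_{EE} - B F⁻¹ Bᵀ,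 equals the matrix M_n obtained from M by replacing the (1,1) and (2,2) entries by -(n+2)/(n+1) and the (1,2) and (2,1) entries by 1/(n+1). Moreover, if M' is negative definite and c ∈ ℝ^r satisfies c 1 = c 2 = 0, then, setting c' = (c, 0) ∈ ℝ^{r+n}, one has c'ᵀ (M')⁻¹ c' = cᵀ (M_n)⁻¹ c. -/
open Matrix

/-- The intersection matrix of an inserted chain of `n` (-2)-curves. -/
noncomputable def chainF (n : ℕ) : Matrix (Fin n) (Fin n) ℝ :=
  fun a b => if a = b then -2 else if (a : ℕ) + 1 = (b : ℕ) ∨ (b : ℕ) + 1 = (a : ℕ) then 1 else 0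

/-- The block coupling the original `r` curves to the inserted chain: the first prop (index 0)
meets the first curve of the chain and the second prop (index 1) meets the last one. -/
noncomputable def coupB (r n : ℕ) : Matrix (Fin r) (Fin n) ℝ :=
  fun i a => if (i : ℕ) = 0 ∧ (a : ℕ) = 0 then 1
    else if (i : ℕ) = 1 ∧ (a : ℕ) + 1 = n then 1 else 0

/-- The original matrix with the `(0,1)` and `(1,0)` entries replaced by `0`. -/
noncomputable def modifiedE {r : ℕ} (M : Matrix (Fin r) (Fin r) ℝ) :
    Matrix (Fin r) (Fin r) ℝ :=
  fun i j => if ((i : ℕ) = 0 ∧ (j : ℕ) = 1) ∨ ((i : ℕ) = 1 ∧ (j : ℕ) = 0) then 0 else M i j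

/-- The intersection matrix `M'` of the `(-2)`-insertion of a chain of `n` `(-2)`-curves. -/
noncomputable def insertedMatrix {r : ℕ} (M : Matrix (Fin r) (Fin r) ℝ) (n : ℕ) :
    Matrix (Fin r ⊕ Fin n) (Fin r ⊕ Fin n) ℝ :=
  Matrix.fromBlocks (modifiedE M) (coupB r n) (coupB r n)ᵀ (chainF n)

/-- The matrix `M_n`, obtained from `M` by replacing the `(0,0)`, `(1,1)` entries by
`-(n+2)/(n+1)` and the `(0,1)`, `(1,0)` entries by `1/(n+1)`. -/
noncomputable def contractedMatrix {r : ℕ} (M : Matrix (Fin r) (Fin r) ℝ) (n : ℕ) :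
    Matrix (Fin r) (Fin r) ℝ :=
  fun i j =>
    if ((i : ℕ) = 0 ∧ (j : ℕ) = 0) ∨ ((i : ℕ) = 1 ∧ (j : ℕ) = 1) then
      -((n : ℝ) + 2) / ((n : ℝ) + 1)
    else if ((i : ℕ) = 0 ∧ (j : ℕ) = 1) ∨ ((i : ℕ) = 1 ∧ (j : ℕ) = 0) then 1 / ((n : ℝ) + 1)
    else M i j

theorem sum_ite_succ_eq_mul {n : ℕ} (g : ℕ → ℝ) (h0 : g 0 = 0) (hn : g (n + 1) = 0) {m : ℕ}
    (hm : m ≤ n + 1) :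
    ∑ k : Fin n, (if (k : ℕ) + 1 = m then (1 : ℝ) else 0) * g (k + 1) = g m := by
  rcases Nat.eq_zero_or_pos m with rfl | hpos
  · simp [h0]
  rcases hm.eq_or_lt with rfl | hlt
  · rw [hn]
    refine Finset.sum_eq_zero fun k _ => ?_
    rw [if_neg (by omega), zero_mul]
  · rw [Finset.sum_eq_single (⟨m - 1, by omega⟩ : Fin n)]
    · simp [Nat.sub_add_cancel hpos]
    · intro k _ hk
      rw [if_neg (fun h => hk (Fin.ext (by simp; omega))), zero_mul]
    · simp

/-- The chain matrix acts as the discrete Laplacian on functions vanishing at both ends. -/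
theorem sum_chainF_mul {n : ℕ} (g : ℕ → ℝ) (h0 : g 0 = 0) (hn : g (n + 1) = 0) (a : Fin n) :
    ∑ k, chainF n a k * g (k + 1) = g a - 2 * g (a + 1) + g (a + 2) := by
  have hrow : ∀ k : Fin n, chainF n a k * g (k + 1) =
      (if (k : ℕ) + 1 = a then (1 : ℝ) else 0) * g (k + 1)
        - 2 * ((if (k : ℕ) + 1 = a + 1 then (1 : ℝ) else 0) * g (k + 1))
        + (if (k : ℕ) + 1 = a + 2 then (1 : ℝ) else 0) * g (k + 1) := by
    intro k
    simp only [chainF, Fin.ext_iff]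
    split_ifs <;> first | omega | ring
  simp only [hrow, Finset.sum_add_distrib, Finset.sum_sub_distrib, ← Finset.mul_sum]
  rw [sum_ite_succ_eq_mul g h0 hn (by omega), sum_ite_succ_eq_mul g h0 hn (by omega),
    sum_ite_succ_eq_mul g h0 hn (by omega)]

/-- The discrete Green function of the chain of length `n` with pole at `b + 1`. -/
noncomputable def chainGreen (n b m : ℕ) : ℝ :=
  if m ≤ b + 1 then -(m * ((n : ℝ) - b)) / (n + 1)
  else -(((b : ℝ) + 1) * ((n : ℝ) + 1 - m)) / (n + 1)

theorem chainF_mul_chainGreen (n : ℕ) :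
    chainF n * Matrix.of (fun a b : Fin n => chainGreen n b (a + 1)) = 1 := by
  ext a b
  have hn : (n : ℝ) + 1 ≠ 0 := by positivity
  have hb := b.isLt
  simp only [Matrix.mul_apply, Matrix.of_apply]
  rw [sum_chainF_mul (chainGreen n b) (by simp [chainGreen])
    (by rw [chainGreen, if_neg (by omega)]; simp)]
  rcases lt_trichotomy (a : ℕ) b with h | h | h
  · rw [Matrix.one_apply_ne (Fin.ne_of_val_ne h.ne)]
    simp only [chainGreen]
    rw [if_pos (by omega), if_pos (by omega), if_pos (by omega)]
    push_cast
    ring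
  · obtain rfl : a = b := Fin.ext h
    rw [Matrix.one_apply_eq]
    simp only [chainGreen]
    rw [if_pos (by omega), if_pos (by omega), if_neg (by omega)]
    push_cast
    field_simp
    ring
  · rw [Matrix.one_apply_ne (Fin.ne_of_val_ne h.ne')]
    simp only [chainGreen]
    rw [if_neg (show ¬ (a : ℕ) + 1 ≤ b + 1 by omega),
      if_neg (show ¬ (a : ℕ) + 2 ≤ b + 1 by omega)]
    split_ifs with h'
    · have hab : (a : ℝ) = b + 1 := by exact_mod_cast (show (a : ℕ) = b + 1 by omega)
      push_cast
      rw [hab]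
      field_simp
      ring
    · push_cast
      ring

theorem isUnit_det_chainF (n : ℕ) : IsUnit (chainF n).det :=
  Matrix.isUnit_det_of_right_inverse (chainF_mul_chainGreen n)

theorem inv_chainF (n : ℕ) :
    (chainF n)⁻¹ = Matrix.of (fun a b : Fin n => chainGreen n b (a + 1)) :=
  Matrix.inv_eq_right_inv (chainF_mul_chainGreen n)

theorem sum_coupB_mul (r N : ℕ) (i : Fin r) (f : Fin (N + 1) → ℝ) :
    ∑ a, coupB r (N + 1) i a * f a =
      if (i : ℕ) = 0 then f 0 else if (i : ℕ) = 1 then f (Fin.last N) else 0 := by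
  by_cases h0 : (i : ℕ) = 0
  · have h : ∀ a : Fin (N + 1), coupB r (N + 1) i a = if a = 0 then 1 else 0 := by
      intro a
      simp only [coupB, Fin.ext_iff, Fin.val_zero]
      split_ifs <;> first | rfl | omega
    simp [h, h0]
  by_cases h1 : (i : ℕ) = 1
  · have h : ∀ a : Fin (N + 1), coupB r (N + 1) i a = if a = Fin.last N then 1 else 0 := by
      intro a
      simp only [coupB, Fin.ext_iff, Fin.val_last]
      split_ifs <;> first | rfl | omega
    simp [h, h1]
  · simp [coupB, h0, h1]

theorem coupB_mul_mul_transpose_apply (r N : ℕ) (X : Matrix (Fin (N + 1)) (Fin (N + 1)) ℝ)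
    (i j : Fin r) :
    (coupB r (N + 1) * X * (coupB r (N + 1))ᵀ) i j =
      if (j : ℕ) = 0 then
        if (i : ℕ) = 0 then X 0 0 else if (i : ℕ) = 1 then X (Fin.last N) 0 else 0
      else if (j : ℕ) = 1 then
        if (i : ℕ) = 0 then X 0 (Fin.last N)
        else if (i : ℕ) = 1 then X (Fin.last N) (Fin.last N) else 0
      else 0 := by
  rw [Matrix.mul_apply]
  simp only [Matrix.transpose_apply, mul_comm _ (coupB r (N + 1) j _), sum_coupB_mul,
    Matrix.mul_apply]

theorem isUnit_of_forall_dotProduct_mulVec_neg {ι : Type*} [Fintype ι] [DecidableEq ι]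
    {A : Matrix ι ι ℝ} (hA : ∀ x : ι → ℝ, x ≠ 0 → x ⬝ᵥ (A *ᵥ x) < 0) : IsUnit A := by
  rw [Matrix.isUnit_iff_isUnit_det, isUnit_iff_ne_zero]
  intro hdet
  obtain ⟨v, hv, hAv⟩ := Matrix.exists_mulVec_eq_zero_iff.mpr hdet
  simpa [hAv] using hA v hv

theorem sumElim_zero_dotProduct_inv_fromBlocks_mulVec {ι κ : Type*} [Fintype ι] [DecidableEq ι]
    [Fintype κ] [DecidableEq κ] (A : Matrix ι ι ℝ) (B : Matrix ι κ ℝ) (C : Matrix κ ι ℝ)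
    (D : Matrix κ κ ℝ) (hD : IsUnit D) (h : IsUnit (Matrix.fromBlocks A B C D)) (c : ι → ℝ) :
    Sum.elim c (0 : κ → ℝ) ⬝ᵥ ((Matrix.fromBlocks A B C D)⁻¹ *ᵥ Sum.elim c (0 : κ → ℝ)) =
      c ⬝ᵥ ((A - B * D⁻¹ * C)⁻¹ *ᵥ c) := by
  let := hD.invertible
  let := h.invertible
  let := Matrix.invertibleOfFromBlocks₂₂Invertible A B C D
  rw [← Matrix.invOf_eq_nonsing_inv (Matrix.fromBlocks A B C D), Matrix.invOf_fromBlocks₂₂_eq,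
    Matrix.fromBlocks_mulVec, ← Matrix.invOf_eq_nonsing_inv D,
    ← Matrix.invOf_eq_nonsing_inv (A - B * ⅟D * C)]
  simp [sumElim_dotProduct_sumElim]

/-- **Lemma 1.7 (i) and (iv), matrix form.** For a `(-2)`-insertion, the chain block `F` is
invertible, the Schur complement of `F` in `M'` is the matrix `M_n`, and if `M'` is negative
definite and `c` vanishes on the two props then `c'ᵀ (M')⁻¹ c' = cᵀ (M_n)⁻¹ c`. -/
theorem insertion_schur_and_quadratic (r n : ℕ) (hr : 2 ≤ r) (hn : 1 ≤ n)
    (M : Matrix (Fin r) (Fin r) ℝ) (hsymm : M.IsSymm)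
    (h00 : M ⟨0, by omega⟩ ⟨0, by omega⟩ = -2)
    (h11 : M ⟨1, by omega⟩ ⟨1, by omega⟩ = -2)
    (h01 : M ⟨0, by omega⟩ ⟨1, by omega⟩ = 1)
    (h10 : M ⟨1, by omega⟩ ⟨0, by omega⟩ = 1) :
    IsUnit (chainF n).det ∧
    modifiedE M - coupB r n * (chainF n)⁻¹ * (coupB r n)ᵀ = contractedMatrix M n ∧
    ((∀ x : Fin r ⊕ Fin n → ℝ, x ≠ 0 → x ⬝ᵥ (insertedMatrix M n *ᵥ x) < 0) →
      ∀ c : Fin r → ℝ, c ⟨0, by omega⟩ = 0 → c ⟨1, by omega⟩ = 0 →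
        Sum.elim c (0 : Fin n → ℝ) ⬝ᵥ ((insertedMatrix M n)⁻¹ *ᵥ Sum.elim c (0 : Fin n → ℝ)) =
          c ⬝ᵥ ((contractedMatrix M n)⁻¹ *ᵥ c)) := by
  have hF := isUnit_det_chainF n
  have hschur :
      modifiedE M - coupB r n * (chainF n)⁻¹ * (coupB r n)ᵀ = contractedMatrix M n := by
    obtain ⟨N, rfl⟩ : ∃ N, n = N + 1 := ⟨n - 1, by omega⟩
    have hN : (N : ℝ) + 1 + 1 ≠ 0 := by positivity
    ext i j
    rw [Matrix.sub_apply, coupB_mul_mul_transpose_apply, inv_chainF]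
    obtain ⟨i, hi⟩ := i
    obtain ⟨j, hj⟩ := j
    simp only [modifiedE, contractedMatrix, Matrix.of_apply, chainGreen]
    rcases i with _ | _ | i <;> rcases j with _ | _ | j <;> simp [h00, h11]
    case succ.zero.zero =>
      split_ifs with hN0
      · simp [hN0]
        norm_num
      · field_simp
    all_goals field_simp
    all_goals ring
  refine ⟨hF, hschur, fun hneg c _ _ => ?_⟩
  rw [← hschur]
  exact sumElim_zero_dotProduct_inv_fromBlocks_mulVec _ _ _ _
    ((Matrix.isUnit_iff_isUnit_det _).mpr hF) (isUnit_of_forall_dotProduct_mulVec_neg hneg) c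
end

section
/- Let r ≥ 2 and let (M_n)_{n ∈ ℕ} be a family of r×r real symmetric negative definite matrices such that (M_n) 1 1 = (M_n) 2 2 = -(n+2)/(n+1), (M_n) 1 2 = (M_n) 2 1 = 1/(n+1), all other entries of M_n are independent of n, and all off-diagonal entries of every M_n are nonnegative. Let c ∈ ℝ^r satisfy c i ≥ 0 for all i and c 1 = c 2 = 0, and set m = (M_0)⁻¹ c. Then -cᵀ (M_n)⁻¹ c = -cᵀ (M_0)⁻¹ c + (n/(n+1))·(det(M_0)/det(M_n))·(m 1 - m 2)², and det(M_0)/det(M_n) > 0, so in particular -cᵀ (M_n)⁻¹ c ≥ -cᵀ (M_0)⁻¹ c. -/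
open Matrix

/-- The matrix determinant lemma for a symmetric rank-one update `t • u uᵀ`. -/
theorem det_add_smul_vecMulVec {ι K : Type*} [Fintype ι] [DecidableEq ι] [Field K]
    (A : Matrix ι ι K) (hA : IsUnit A.det) (u : ι → K) (t : K) :
    (A + t • vecMulVec u u).det = A.det * (1 + t * (u ⬝ᵥ (A⁻¹ *ᵥ u))) := by
  rw [← smul_vecMulVec, vecMulVec_eq Unit, det_add_replicateCol_mul_replicateRow hA]
  congr 2
  rw [Matrix.mul_assoc, ← replicateCol_mulVec, det_unique, Matrix.add_apply, one_apply_eq,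
    replicateRow_mul_replicateCol_apply, mulVec_smul, dotProduct_smul, smul_eq_mul]

/-- The Sherman–Morrison formula for the quadratic form of the inverse of a symmetric matrix. -/
theorem dotProduct_inv_add_smul_vecMulVec_mulVec {ι K : Type*} [Fintype ι] [DecidableEq ι]
    [Field K] (A : Matrix ι ι K) (hsymm : A.IsSymm) (hA : IsUnit A.det) (u c : ι → K) (t : K)
    (hB : IsUnit (A + t • vecMulVec u u).det) :
    c ⬝ᵥ ((A + t • vecMulVec u u)⁻¹ *ᵥ c) = c ⬝ᵥ (A⁻¹ *ᵥ c) -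
      t * (A.det / (A + t • vecMulVec u u).det) * (u ⬝ᵥ (A⁻¹ *ᵥ c)) ^ 2 := by
  have hdet := det_add_smul_vecMulVec A hA u t
  have hA0 : A.det ≠ 0 := hA.ne_zero
  have hs : 1 + t * (u ⬝ᵥ (A⁻¹ *ᵥ u)) ≠ 0 := right_ne_zero_of_mul (hdet ▸ hB.ne_zero)
  have hratio : A.det / (A + t • vecMulVec u u).det = (1 + t * (u ⬝ᵥ (A⁻¹ *ᵥ u)))⁻¹ := by
    rw [hdet]
    field_simp
  have hcu : c ⬝ᵥ (A⁻¹ *ᵥ u) = u ⬝ᵥ (A⁻¹ *ᵥ c) := by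
    rw [dotProduct_mulVec, ← mulVec_transpose, transpose_nonsing_inv, hsymm.eq, dotProduct_comm]
  rw [hratio]
  generalize hx : (1 + t * (u ⬝ᵥ (A⁻¹ *ᵥ u)))⁻¹ = x
  have hinv : (A + t • vecMulVec u u)⁻¹ *ᵥ c =
      A⁻¹ *ᵥ c - (t * (u ⬝ᵥ (A⁻¹ *ᵥ c)) * x) • (A⁻¹ *ᵥ u) := by
    have hsolve : (A + t • vecMulVec u u) *ᵥ
        (A⁻¹ *ᵥ c - (t * (u ⬝ᵥ (A⁻¹ *ᵥ c)) * x) • (A⁻¹ *ᵥ u)) = c := by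
      have hcancel (v : ι → K) : A *ᵥ (A⁻¹ *ᵥ v) = v := by
        rw [mulVec_mulVec, mul_nonsing_inv _ hA, one_mulVec]
      rw [mulVec_sub, mulVec_smul, add_mulVec, add_mulVec, hcancel, hcancel, smul_mulVec, smul_mulVec,
        vecMulVec_mulVec, vecMulVec_mulVec]
      ext i
      simp only [Pi.add_apply, Pi.sub_apply, Pi.smul_apply, smul_eq_mul,
        MulOpposite.smul_eq_mul_unop, MulOpposite.unop_op]
      rw [← hx]
      field_simp
      ring
    conv_lhs => rw [← hsolve]
    rw [mulVec_mulVec, nonsing_inv_mul _ hB, one_mulVec]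
  rw [hinv, dotProduct_sub, dotProduct_smul, hcu, smul_eq_mul]
  ring

/-- The determinant of a negative definite matrix has the sign `(-1) ^ Fintype.card ι`. -/
theorem neg_one_pow_card_mul_det_pos_of_negDef {ι : Type*} [Fintype ι] [DecidableEq ι]
    (A : Matrix ι ι ℝ) (hsymm : A.IsSymm) (hneg : ∀ x : ι → ℝ, x ≠ 0 → x ⬝ᵥ (A *ᵥ x) < 0) :
    0 < (-1) ^ Fintype.card ι * A.det := by
  have hpos : (-A).PosDef := by
    refine PosDef.of_dotProduct_mulVec_pos ?_ fun x hx => ?_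
    · rw [IsHermitian, conjTranspose_eq_transpose_of_trivial, transpose_neg, hsymm.eq]
    · simpa [neg_mulVec] using hneg x hx
  simpa [det_neg] using hpos.det_pos

/-- **Corollary 1.11** (with the explicit formula from its proof): a `(-2)`-insertion does not
decrease `-K² = -cᵀ M⁻¹ c`:
`-cᵀ M_n⁻¹ c = -cᵀ M₀⁻¹ c + (n/(n+1))·(det M₀ / det M_n)·(m₁ - m₂)²` and
`det M₀ / det M_n > 0`. -/
theorem insertion_negK2_mono
    (r : ℕ) (hr : 2 ≤ r) (N : ℕ → Matrix (Fin r) (Fin r) ℝ)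
    (hsymm : ∀ n : ℕ, (N n).IsSymm)
    (hnegdef : ∀ n : ℕ, ∀ x : Fin r → ℝ, x ≠ 0 → x ⬝ᵥ (N n *ᵥ x) < 0)
    (h00 : ∀ n : ℕ, N n ⟨0, by omega⟩ ⟨0, by omega⟩ = -((n : ℝ) + 2) / ((n : ℝ) + 1))
    (h11 : ∀ n : ℕ, N n ⟨1, by omega⟩ ⟨1, by omega⟩ = -((n : ℝ) + 2) / ((n : ℝ) + 1))
    (h01 : ∀ n : ℕ, N n ⟨0, by omega⟩ ⟨1, by omega⟩ = 1 / ((n : ℝ) + 1))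
    (h10 : ∀ n : ℕ, N n ⟨1, by omega⟩ ⟨0, by omega⟩ = 1 / ((n : ℝ) + 1))
    (hconst : ∀ n k : ℕ, ∀ i j : Fin r, ¬((i : ℕ) ≤ 1 ∧ (j : ℕ) ≤ 1) → N n i j = N k i j)
    (hoffdiag : ∀ n : ℕ, ∀ i j : Fin r, i ≠ j → 0 ≤ N n i j)
    (c : Fin r → ℝ) (hc : ∀ i, 0 ≤ c i)
    (hc0 : c ⟨0, by omega⟩ = 0) (hc1 : c ⟨1, by omega⟩ = 0)
    (n : ℕ)
    (m : Fin r → ℝ) (hm : m = (N 0)⁻¹ *ᵥ c) :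
    - (c ⬝ᵥ ((N n)⁻¹ *ᵥ c)) =
      - (c ⬝ᵥ ((N 0)⁻¹ *ᵥ c)) +
        ((n : ℝ) / ((n : ℝ) + 1)) * ((N 0).det / (N n).det) *
          (m ⟨0, by omega⟩ - m ⟨1, by omega⟩) ^ 2 ∧
    0 < (N 0).det / (N n).det ∧
    - (c ⬝ᵥ ((N 0)⁻¹ *ᵥ c)) ≤ - (c ⬝ᵥ ((N n)⁻¹ *ᵥ c)) := by
  set p : Fin r := ⟨0, by omega⟩ with hp
  set q : Fin r := ⟨1, by omega⟩ with hq
  have hpq : p ≠ q := by simp [hp, hq]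
  have hn : (n : ℝ) + 1 ≠ 0 := by positivity
  have hdet k := neg_one_pow_card_mul_det_pos_of_negDef (N k) (hsymm k) (hnegdef k)
  have hunit k : IsUnit (N k).det := (right_ne_zero_of_mul (hdet k).ne').isUnit
  have hratio : 0 < (N 0).det / (N n).det := by
    rw [← mul_div_mul_left _ _ (left_ne_zero_of_mul (hdet n).ne')]
    exact div_pos (hdet 0) (hdet n)
  have hupdate : N n = N 0 + ((n : ℝ) / (n + 1)) •
      vecMulVec (Pi.single p 1 - Pi.single q 1) (Pi.single p 1 - Pi.single q 1) := by
    have hcases (i : Fin r) : i = p ∨ i = q ∨ (i ≠ p ∧ i ≠ q ∧ ¬(i : ℕ) ≤ 1) := by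
      simp only [hp, hq, Fin.ext_iff, ne_eq]
      omega
    ext i j
    simp only [Matrix.add_apply, Matrix.smul_apply, vecMulVec_apply, Pi.sub_apply, smul_eq_mul]
    obtain rfl | rfl | ⟨hip, hiq, hi⟩ := hcases i
    · obtain rfl | rfl | ⟨hjp, hjq, hj⟩ := hcases j
      · simp [h00, hpq]
        field_simp
        ring
      · simp [h01, hpq, hpq.symm]
        field_simp
        ring
      · simp [hjp, hjq, hconst n 0 _ j fun h => hj h.2]
    · obtain rfl | rfl | ⟨hjp, hjq, hj⟩ := hcases j
      · simp [h10, hpq, hpq.symm]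
        field_simp
        ring
      · simp [h11, hpq.symm]
        field_simp
        ring
      · simp [hjp, hjq, hconst n 0 _ j fun h => hj h.2]
    · simp [hip, hiq, hconst n 0 i j fun h => hi h.1]
  have hformula : - (c ⬝ᵥ ((N n)⁻¹ *ᵥ c)) = - (c ⬝ᵥ ((N 0)⁻¹ *ᵥ c)) +
      ((n : ℝ) / ((n : ℝ) + 1)) * ((N 0).det / (N n).det) * (m p - m q) ^ 2 := by
    have h := dotProduct_inv_add_smul_vecMulVec_mulVec (N 0) (hsymm 0) (hunit 0)
      (Pi.single p 1 - Pi.single q 1) c ((n : ℝ) / (n + 1)) (hupdate ▸ hunit n)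
    rw [← hupdate, ← hm, sub_dotProduct, single_one_dotProduct, single_one_dotProduct] at h
    rw [h, ← hm]
    ring
  refine ⟨hformula, hratio, ?_⟩
  rw [hformula]
  exact le_add_of_nonneg_right (by positivity)
end

section
/- If α ∈ ℝ is an accumulation point of S from below, i.e., for every ε > 0 there exists s ∈ S with α - ε < s < α, then α is a rational number. -/
open Matrix

/-! ### Resistor networks

A network on a vertex set `V` is a multiset of edges `(a, b, N)`, where the natural number `N` is
the length (resistance) of an edge joining `a` to `b`. -/

section Network

variable {V : Type*}

/-- The energy `(x a - x b)² / N` of an edge `(a, b, N)`. -/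
noncomputable def edgeEnergy (x : V → ℝ) (e : V × V × ℕ) : ℝ :=
  (x e.1 - x e.2.1) ^ 2 / (e.2.2 : ℝ)

/-- The total energy of the edges of a network. -/
noncomputable def totalEnergy (L : Multiset (V × V × ℕ)) (x : V → ℝ) : ℝ :=
  (L.map (edgeEnergy x)).sum

/-- The functional `2 c · x - ∑ hᵢ xᵢ²` minus the energy of the network. -/
noncomputable def netFunctional [Fintype V] (h c : V → ℤ) (L : Multiset (V × V × ℕ))
    (x : V → ℝ) : ℝ :=
  ∑ i, (2 * (c i : ℝ) * x i - (h i : ℝ) * x i ^ 2) - totalEnergy L x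

/-- The number of ends of the edge `e` at `v`; a loop counts twice. -/
def edgeDegree [DecidableEq V] (v : V) (e : V × V × ℕ) : ℕ :=
  (if e.1 = v then 1 else 0) + (if e.2.1 = v then 1 else 0)

/-- The number of edge ends at `v`. -/
def netDegree [DecidableEq V] (L : Multiset (V × V × ℕ)) (v : V) : ℕ :=
  (L.map (edgeDegree v)).sum

lemma totalEnergy_cons (e : V × V × ℕ) (L : Multiset (V × V × ℕ)) (x : V → ℝ) :
    totalEnergy (e ::ₘ L) x = edgeEnergy x e + totalEnergy L x := by
  simp [totalEnergy]

variable [DecidableEq V]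

lemma netDegree_cons (e : V × V × ℕ) (L : Multiset (V × V × ℕ)) (v : V) :
    netDegree (e ::ₘ L) v = edgeDegree v e + netDegree L v := by
  simp [netDegree]

lemma netDegree_ne_zero_of_mem {L : Multiset (V × V × ℕ)} {e : V × V × ℕ} (he : e ∈ L) {v : V}
    (hv : e.1 = v ∨ e.2.1 = v) : netDegree L v ≠ 0 := by
  obtain ⟨L', rfl⟩ := Multiset.exists_cons_of_mem he
  rw [netDegree_cons]
  rcases hv with hv | hv <;> simp [edgeDegree, hv]

lemma exists_mem_of_netDegree_ne_zero {L : Multiset (V × V × ℕ)} {v : V}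
    (h : netDegree L v ≠ 0) : ∃ e ∈ L, e.1 = v ∨ e.2.1 = v := by
  contrapose! h
  refine Multiset.sum_eq_zero fun n hn => ?_
  obtain ⟨e, he, rfl⟩ := Multiset.mem_map.1 hn
  simp [edgeDegree, h e he]

lemma totalEnergy_congr {L : Multiset (V × V × ℕ)} {x y : V → ℝ}
    (h : ∀ v, netDegree L v ≠ 0 → x v = y v) : totalEnergy L x = totalEnergy L y := by
  unfold totalEnergy
  congr 1
  refine Multiset.map_congr rfl fun e he => ?_
  rw [edgeEnergy, edgeEnergy, h _ (netDegree_ne_zero_of_mem he (Or.inl rfl)),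
    h _ (netDegree_ne_zero_of_mem he (Or.inr rfl))]

lemma netFunctional_congr [Fintype V] {h c : V → ℤ} {L : Multiset (V × V × ℕ)} {x y : V → ℝ}
    (hxy : ∀ v, h v ≠ 0 ∨ c v ≠ 0 ∨ netDegree L v ≠ 0 → x v = y v) :
    netFunctional h c L x = netFunctional h c L y := by
  unfold netFunctional
  rw [totalEnergy_congr fun v hv => hxy v (Or.inr (Or.inr hv))]
  congr 1
  refine Finset.sum_congr rfl fun i _ => ?_
  by_cases hi : h i ≠ 0 ∨ c i ≠ 0 ∨ netDegree L i ≠ 0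
  · rw [hxy i hi]
  · push Not at hi
    simp [hi.1, hi.2.1]

/-- An edge end at `v` can be exhibited as the first edge, oriented away from `v`. -/
lemma exists_cons_of_netDegree_ne_zero {L : Multiset (V × V × ℕ)} {v : V}
    (h : netDegree L v ≠ 0) (hpos : ∀ e ∈ L, 0 < e.2.2) :
    ∃ (a : V) (N : ℕ) (L' : Multiset (V × V × ℕ)), 0 < N ∧ (∀ e ∈ L', 0 < e.2.2) ∧
      (∀ x, totalEnergy L x = edgeEnergy x (v, a, N) + totalEnergy L' x) ∧
      ∀ w, netDegree L w = edgeDegree w (v, a, N) + netDegree L' w := by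
  obtain ⟨e, he, hv⟩ := exists_mem_of_netDegree_ne_zero h
  obtain ⟨L', rfl⟩ := Multiset.exists_cons_of_mem he
  obtain ⟨a, b, N⟩ := e
  have hN : 0 < N := hpos _ he
  have hL' : ∀ e ∈ L', 0 < e.2.2 := fun e he => hpos e (Multiset.mem_cons_of_mem he)
  rcases hv with rfl | rfl
  · exact ⟨b, N, L', hN, hL', fun x => totalEnergy_cons _ _ _, fun w => netDegree_cons _ _ _⟩
  · refine ⟨a, N, L', hN, hL', fun x => ?_, fun w => ?_⟩
    · rw [totalEnergy_cons]
      simp only [edgeEnergy]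
      ring
    · rw [netDegree_cons]
      simp only [edgeDegree]
      ring

lemma sq_div_add_le {a b v N N' : ℝ} (hN : 0 < N) (hN' : 0 < N') :
    (a - b) ^ 2 / (N + N') ≤ (v - a) ^ 2 / N + (v - b) ^ 2 / N' := by
  rw [div_add_div _ _ hN.ne' hN'.ne', div_le_div_iff₀ (by positivity) (by positivity)]
  nlinarith [sq_nonneg ((v - a) * N' + (v - b) * N)]

lemma sq_div_add_eq {a b N N' : ℝ} (hN : 0 < N) (hN' : 0 < N') :
    ((a * N' + b * N) / (N + N') - a) ^ 2 / N + ((a * N' + b * N) / (N + N') - b) ^ 2 / N' =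
      (a - b) ^ 2 / (N + N') := by
  have : N + N' ≠ 0 := by positivity
  field_simp
  ring

variable [Fintype V]

/-- Series reduction: a vertex of degree two can be removed without changing the supremum of the
functional. -/
lemma exists_eliminate_vertex {h c : V → ℤ} {L : Multiset (V × V × ℕ)} {v : V}
    (hh : h v = 0) (hc : c v = 0) (hdeg : netDegree L v = 2) (hpos : ∀ e ∈ L, 0 < e.2.2) :
    ∃ L' : Multiset (V × V × ℕ), (∀ e ∈ L', 0 < e.2.2) ∧ netDegree L' v = 0 ∧
      (∀ w, w ≠ v → netDegree L' w = netDegree L w) ∧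
      ∀ t : ℝ, (∀ x, netFunctional h c L x ≤ t) ↔ ∀ x, netFunctional h c L' x ≤ t := by
  obtain ⟨a, N, L₁, hN, hpos₁, hen₁, hdeg₁⟩ :=
    exists_cons_of_netDegree_ne_zero (v := v) (by rw [hdeg]; norm_num) hpos
  by_cases hav : a = v
  · subst hav
    have hd := hdeg₁ a
    simp only [edgeDegree, if_true] at hd
    refine ⟨L₁, hpos₁, by omega, fun w hw => ?_, fun t => ?_⟩
    · rw [hdeg₁ w]
      simp [edgeDegree, hw.symm]
    · have : ∀ x, netFunctional h c L x = netFunctional h c L₁ x := fun x => by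
        simp [netFunctional, hen₁, edgeEnergy]
      simp_rw [this]
  have hd := hdeg₁ v
  simp only [edgeDegree, if_true, hav, if_false] at hd
  obtain ⟨b, N', L₂, hN', hpos₂, hen₂, hdeg₂⟩ :=
    exists_cons_of_netDegree_ne_zero (L := L₁) (v := v) (by omega) hpos₁
  have hd' := hdeg₂ v
  have hbv : b ≠ v := by
    rintro rfl
    simp only [edgeDegree, if_true] at hd'
    omega
  simp only [edgeDegree, if_true, hbv, if_false] at hd'
  have hd₂ : netDegree L₂ v = 0 := by omega
  refine ⟨(a, b, N + N') ::ₘ L₂, ?_, ?_, fun w hw => ?_, fun t => ⟨fun H x => ?_, fun H x => ?_⟩⟩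
  · intro e he
    rcases Multiset.mem_cons.1 he with rfl | he
    · exact Nat.add_pos_left hN _
    · exact hpos₂ e he
  · simp [netDegree_cons, edgeDegree, hav, hbv, hd₂]
  · rw [netDegree_cons, hdeg₁, hdeg₂]
    simp [edgeDegree, hw.symm]
    ring
  · have hNr : (0 : ℝ) < N := by exact_mod_cast hN
    have hNr' : (0 : ℝ) < N' := by exact_mod_cast hN'
    set y := Function.update x v ((x a * N' + x b * N) / (N + N'))
    have hyw : ∀ w, w ≠ v → y w = x w := fun w hw => Function.update_of_ne hw _ _
    have hyv : y v = (x a * N' + x b * N) / (N + N') := Function.update_self _ _ _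
    have hL : netFunctional h c ((a, b, N + N') ::ₘ L₂) x =
        netFunctional h c ((a, b, N + N') ::ₘ L₂) y := by
      refine netFunctional_congr fun w hw => (hyw w ?_).symm
      rintro rfl
      simp [hh, hc, netDegree_cons, edgeDegree, hav, hbv, hd₂] at hw
    rw [hL]
    refine le_trans (le_of_eq ?_) (H y)
    simp only [netFunctional, totalEnergy_cons, hen₁, hen₂, edgeEnergy]
    rw [hyv, hyw a hav, hyw b hbv, ← add_assoc, sq_div_add_eq hNr hNr']
    push_cast
    rfl
  · have hNr : (0 : ℝ) < N := by exact_mod_cast hN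
    have hNr' : (0 : ℝ) < N' := by exact_mod_cast hN'
    refine le_trans ?_ (H x)
    simp only [netFunctional, totalEnergy_cons, hen₁, hen₂, edgeEnergy]
    have := sq_div_add_le (a := x a) (b := x b) (v := x v) hNr hNr'
    push_cast
    linarith

lemma exists_eliminate_finset {h c : V → ℤ} {L : Multiset (V × V × ℕ)} (T : Finset V)
    (hT : ∀ v ∈ T, h v = 0 ∧ c v = 0 ∧ netDegree L v = 2) (hpos : ∀ e ∈ L, 0 < e.2.2) :
    ∃ L' : Multiset (V × V × ℕ), (∀ e ∈ L', 0 < e.2.2) ∧ (∀ v ∈ T, netDegree L' v = 0) ∧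
      (∀ w ∉ T, netDegree L' w = netDegree L w) ∧
      ∀ t : ℝ, (∀ x, netFunctional h c L x ≤ t) ↔ ∀ x, netFunctional h c L' x ≤ t := by
  induction T using Finset.induction_on with
  | empty => exact ⟨L, hpos, by simp, by simp, by simp⟩
  | insert v T hv ih =>
    obtain ⟨L₁, hpos₁, hz₁, hd₁, hiff₁⟩ := ih fun w hw => hT w (Finset.mem_insert_of_mem hw)
    obtain ⟨hh, hc, hd⟩ := hT v (Finset.mem_insert_self v T)
    obtain ⟨L₂, hpos₂, hz₂, hd₂, hiff₂⟩ :=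
      exists_eliminate_vertex (L := L₁) hh hc ((hd₁ v hv).trans hd) hpos₁
    refine ⟨L₂, hpos₂, fun w hw => ?_, fun w hw => ?_, fun t => (hiff₁ t).trans (hiff₂ t)⟩
    · rcases Finset.mem_insert.1 hw with rfl | hw
      · exact hz₂
      · rw [hd₂ w (fun h => hv (h ▸ hw)), hz₁ w hw]
    · rw [Finset.mem_insert, not_or] at hw
      rw [hd₂ w hw.1, hd₁ w hw.2]

lemma sum_edgeDegree (e : V × V × ℕ) : ∑ v, edgeDegree v e = 2 := by
  simp [edgeDegree, Finset.sum_add_distrib]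

lemma sum_netDegree (L : Multiset (V × V × ℕ)) : ∑ v, netDegree L v = 2 * Multiset.card L := by
  induction L using Multiset.induction_on with
  | empty => simp [netDegree]
  | cons e L ih =>
    simp only [netDegree_cons, Finset.sum_add_distrib, ih, sum_edgeDegree, Multiset.card_cons]
    ring

/-- A functional on `Fin n → ℝ` of the same shape, with conductances `w`. -/
noncomputable def modelFunctional {n : ℕ} (h c : Fin n → ℤ) (ends : Fin n → Fin n × Fin n)
    (w : Fin n → ℝ) (y : Fin n → ℝ) : ℝ :=
  ∑ j, (2 * (c j : ℝ) * y j - (h j : ℝ) * y j ^ 2) -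
    ∑ k, w k * (y (ends k).1 - y (ends k).2) ^ 2

/-- A network with few vertices and edges in its support is equivalent to a model on `Fin n`. -/
lemma exists_model {n : ℕ} (hn : 0 < n) {h c : V → ℤ} {L : Multiset (V × V × ℕ)} (T : Finset V)
    (hT : ∀ v ∈ T, h v = 0 ∧ c v = 0 ∧ netDegree L v = 0) (hpos : ∀ e ∈ L, 0 < e.2.2)
    (hcard : Tᶜ.card ≤ n) (hL : Multiset.card L ≤ n)
    (hhb : ∑ i, |h i| ≤ n) (hcb : ∑ i, |c i| ≤ n) :
    ∃ (h' c' : Fin n → ℤ) (ends : Fin n → Fin n × Fin n) (N : Fin n → ℕ),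
      (∀ j, |h' j| ≤ n) ∧ (∀ j, |c' j| ≤ n) ∧ (∀ k, 0 < N k) ∧
      ∀ t : ℝ, (∀ x, netFunctional h c L x ≤ t) ↔
        ∀ y, modelFunctional h' c' ends (fun k => (N k : ℝ)⁻¹) y ≤ t := by
  have : Nonempty (Fin n) := ⟨⟨0, hn⟩⟩
  let j₀ : Fin n := ⟨0, hn⟩
  obtain ⟨φ, hφ⟩ : ∃ φ : V → Fin n, Set.InjOn φ (Tᶜ : Finset V) := by
    rw [Set.exists_injOn_iff_injective]
    obtain ⟨f⟩ := Function.Embedding.nonempty_of_card_le (α := (Tᶜ : Finset V)) (β := Fin n)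
      (by simpa only [Fintype.card_coe, Fintype.card_fin] using hcard)
    exact ⟨f, f.injective⟩
  obtain ⟨g, hg⟩ : ∃ g : Fin n → Fin n × Fin n × ℕ,
      (L.map fun e => (φ e.1, φ e.2.1, e.2.2)) + Multiset.replicate (n - Multiset.card L) (j₀, j₀, 1)
        = ((List.ofFn g : List _) : Multiset _) := by
    set L' := (L.map fun e => (φ e.1, φ e.2.1, e.2.2)) +
      Multiset.replicate (n - Multiset.card L) (j₀, j₀, 1) with hL'
    have hlen : L'.toList.length = n := by
      rw [Multiset.length_toList, hL']
      simp only [Multiset.card_add, Multiset.card_map, Multiset.card_replicate]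
      omega
    refine ⟨fun k => L'.toList.get (k.cast hlen.symm), ?_⟩
    conv_lhs => rw [← Multiset.coe_toList L']
    congr 1
    refine List.ext_get (by simp [hlen]) fun m h₁ h₂ => ?_
    simp
  have hen : ∀ y : Fin n → ℝ, totalEnergy L (y ∘ φ) = ∑ k, edgeEnergy y (g k) := by
    intro y
    have h₁ := congrArg (fun M => totalEnergy M y) hg
    simp only [totalEnergy, Multiset.map_add, Multiset.sum_add, Multiset.map_map,
      Multiset.map_replicate, Multiset.sum_replicate, Multiset.map_coe, Multiset.sum_coe,
      List.map_ofFn, List.sum_ofFn] at h₁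
    have h₂ : edgeEnergy (y ∘ φ) = fun e => (y (φ e.1) - y (φ e.2.1)) ^ 2 / (e.2.2 : ℝ) := rfl
    rw [totalEnergy, h₂]
    simpa [edgeEnergy, Function.comp_def] using h₁
  have hfib : ∀ u : V → ℤ, ∀ j, |∑ i with φ i = j, u i| ≤ ∑ i, |u i| := fun u j =>
    (Finset.abs_sum_le_sum_abs _ _).trans
      (Finset.sum_le_sum_of_subset_of_nonneg (Finset.filter_subset _ _) fun _ _ _ => abs_nonneg _)
  have hmodel : ∀ y, modelFunctional (fun j => ∑ i with φ i = j, h i)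
      (fun j => ∑ i with φ i = j, c i) (fun k => ((g k).1, (g k).2.1))
      (fun k => ((g k).2.2 : ℝ)⁻¹) y = netFunctional h c L (y ∘ φ) := by
    intro y
    unfold modelFunctional netFunctional
    rw [hen]
    congr 1
    · rw [← Finset.sum_fiberwise _ φ]
      refine Finset.sum_congr rfl fun j _ => ?_
      push_cast
      rw [Finset.mul_sum, Finset.sum_mul, Finset.sum_mul, ← Finset.sum_sub_distrib]
      refine Finset.sum_congr rfl fun i hi => ?_
      rw [Function.comp_apply, (Finset.mem_filter.1 hi).2]
    · refine Finset.sum_congr rfl fun k _ => ?_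
      rw [edgeEnergy]
      ring
  refine ⟨fun j => ∑ i with φ i = j, h i, fun j => ∑ i with φ i = j, c i,
    fun k => ((g k).1, (g k).2.1), fun k => (g k).2.2, fun j => (hfib h j).trans hhb, fun j => (hfib c j).trans hcb, fun k => ?_, fun t => ?_⟩
  rotate_left
  · simp_rw [hmodel]
    refine ⟨fun H y => H _, fun H x => ?_⟩
    have hinj := Set.injOn_iff_injective.1 hφ
    refine le_trans (le_of_eq ?_) (H (Function.extend
      (Set.domRestrict ((Tᶜ : Finset V) : Set V) φ) (fun v => x v) 0))
    refine netFunctional_congr fun v hv => ?_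
    have hvT : v ∈ ((Tᶜ : Finset V) : Set V) := by
      simp only [Finset.coe_compl, Set.mem_compl_iff, Finset.mem_coe]
      intro hvT
      obtain ⟨h₁, h₂, h₃⟩ := hT v hvT
      simp [h₁, h₂, h₃] at hv
    exact (hinj.extend_apply (fun v => x v) 0 ⟨v, hvT⟩).symm
  · have hk : g k ∈ ((List.ofFn g : List _) : Multiset _) := by
      simp [List.mem_ofFn]
    rw [← hg, Multiset.mem_add] at hk
    rcases hk with hk | hk
    · obtain ⟨e, he, hek⟩ := Multiset.mem_map.1 hk
      simpa only [← hek] using hpos e he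
    · simp only [Multiset.eq_of_mem_replicate hk, zero_lt_one]

end Network

/-! ### Suprema of rational quadratic functionals -/

section Quadratic

variable {n : ℕ}

lemma two_mul_dotProduct_sub_eq {S : Matrix (Fin n) (Fin n) ℝ} (hS : S.IsSymm)
    {b z : Fin n → ℝ} (hz : S *ᵥ z = b) (y : Fin n → ℝ) :
    2 * (b ⬝ᵥ y) - y ⬝ᵥ (S *ᵥ y) = b ⬝ᵥ z - (y - z) ⬝ᵥ (S *ᵥ (y - z)) := by
  have h₁ : z ⬝ᵥ (S *ᵥ y) = b ⬝ᵥ y := by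
    rw [Matrix.dotProduct_mulVec, ← Matrix.mulVec_transpose, hS.eq, hz]
  rw [Matrix.mulVec_sub, dotProduct_sub, sub_dotProduct, sub_dotProduct, h₁, hz,
    dotProduct_comm y b, dotProduct_comm z b]
  ring

lemma nonneg_of_bounded_quadratic {α β γ : ℝ} (h : ∀ t : ℝ, 2 * t * β - t ^ 2 * γ ≤ α) :
    0 ≤ γ := by
  by_contra! hγ
  have h₀ : 0 ≤ |α| / (-γ) := div_nonneg (abs_nonneg α) (by linarith)
  have h₁ := h (1 + |α| / (-γ))
  have h₂ := h (-(1 + |α| / (-γ)))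
  have h₃ : |α| / (-γ) * (-γ) = |α| := div_mul_cancel₀ _ (by linarith)
  have h₄ := le_abs_self α
  nlinarith [mul_nonneg h₀ (neg_nonneg.2 hγ.le), mul_nonneg h₀ (mul_nonneg h₀ (neg_nonneg.2 hγ.le))]

lemma eq_zero_of_bounded_linear {α β : ℝ} (h : ∀ t : ℝ, 2 * t * β ≤ α) : β = 0 := by
  by_contra hβ
  have h₁ := h ((|α| + 1) / (2 * β))
  have h₂ : 2 * ((|α| + 1) / (2 * β)) * β = |α| + 1 := by field_simp
  linarith [le_abs_self α]

/-- A rational quadratic functional that is bounded above attains its supremum at a rational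
point. -/
lemma exists_rat_of_sup_quadratic {S : Matrix (Fin n) (Fin n) ℚ} (hS : S.IsSymm)
    (b : Fin n → ℚ) {α : ℝ}
    (hα : ∀ t : ℝ, (∀ y : Fin n → ℝ, 2 * ((fun i => (b i : ℝ)) ⬝ᵥ y) -
      y ⬝ᵥ (S.map (Rat.castHom ℝ) *ᵥ y) ≤ t) ↔ α ≤ t) :
    ∃ q : ℚ, α = (q : ℝ) := by
  have hle := (hα α).2 le_rfl
  have hscale : ∀ (y : Fin n → ℝ) (t : ℝ), 2 * t * ((fun i => (b i : ℝ)) ⬝ᵥ y) -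
      t ^ 2 * (y ⬝ᵥ (S.map (Rat.castHom ℝ) *ᵥ y)) ≤ α := by
    intro y t
    refine le_trans (le_of_eq ?_) (hle (t • y))
    rw [Matrix.mulVec_smul, dotProduct_smul, dotProduct_smul, smul_dotProduct]
    simp only [smul_eq_mul]
    ring
  have hcast : ∀ z : Fin n → ℚ, S.map (Rat.castHom ℝ) *ᵥ (fun i => (z i : ℝ)) =
      fun i => (((S *ᵥ z) i : ℚ) : ℝ) := by
    intro z
    ext i
    exact ((Rat.castHom ℝ).map_mulVec S z i).symm
  have hcastdot : ∀ u v : Fin n → ℚ, (fun i => (u i : ℝ)) ⬝ᵥ (fun i => (v i : ℝ)) =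
      ((u ⬝ᵥ v : ℚ) : ℝ) := fun u v => ((Rat.castHom ℝ).map_dotProduct u v).symm
  obtain ⟨z, hz⟩ : ∃ z, S *ᵥ z = b := by
    by_contra hb
    have hb' : b ∉ LinearMap.range S.mulVecLin := by
      rintro ⟨z, hz⟩
      exact hb ⟨z, hz⟩
    obtain ⟨f, hfb, hf⟩ := Submodule.exists_le_ker_of_notMem hb'
    have hfdot : ∀ v, f v = (fun i => f (Pi.single i 1)) ⬝ᵥ v := by
      intro v
      rw [f.pi_apply_eq_sum_univ v]
      refine Finset.sum_congr rfl fun i _ => ?_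
      rw [smul_eq_mul, mul_comm]
      congr 2
      ext j
      simp [Pi.single_apply, eq_comm]
    set y : Fin n → ℚ := fun i => f (Pi.single i 1)
    have hSy : S *ᵥ y = 0 := by
      refine dotProduct_eq_zero _ fun v => ?_
      rw [← hS.eq, Matrix.mulVec_transpose, ← Matrix.dotProduct_mulVec, ← hfdot]
      exact hf ⟨v, rfl⟩
    have hby : (fun i => (b i : ℝ)) ⬝ᵥ (fun i => (y i : ℝ)) = 0 := by
      refine eq_zero_of_bounded_linear (α := α) fun t => ?_
      have := hscale (fun i => (y i : ℝ)) t
      rw [hcast, hSy] at this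
      simpa [dotProduct] using this
    rw [hcastdot, dotProduct_comm, ← hfdot] at hby
    exact hfb (by exact_mod_cast hby)
  have hSr : (S.map (Rat.castHom ℝ)).IsSymm := hS.map _
  have hzr : S.map (Rat.castHom ℝ) *ᵥ (fun i => (z i : ℝ)) = fun i => (b i : ℝ) := by
    rw [hcast, hz]
  refine ⟨b ⬝ᵥ z, le_antisymm ((hα _).1 fun y => ?_) ?_⟩
  · rw [two_mul_dotProduct_sub_eq hSr hzr, hcastdot]
    have := nonneg_of_bounded_quadratic (hscale (y - fun i => (z i : ℝ)))
    linarith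
  · have := hle fun i => (z i : ℝ)
    rw [two_mul_dotProduct_sub_eq hSr hzr, hcastdot] at this
    simpa using this

lemma exists_rat_of_sup_model {h c : Fin n → ℤ} {ends : Fin n → Fin n × Fin n} (w : Fin n → ℚ)
    {α : ℝ} (hα : ∀ t : ℝ, (∀ y, modelFunctional h c ends (fun k => (w k : ℝ)) y ≤ t) ↔ α ≤ t) :
    ∃ q : ℚ, α = (q : ℝ) := by
  let v : Fin n → Fin n → ℚ := fun k => Pi.single (ends k).1 1 - Pi.single (ends k).2 1
  let S : Matrix (Fin n) (Fin n) ℚ :=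
    Matrix.diagonal (fun i => (h i : ℚ)) + ∑ k, w k • Matrix.vecMulVec (v k) (v k)
  have hS : S.IsSymm := by
    refine Matrix.IsSymm.add (Matrix.isSymm_diagonal _) ?_
    rw [Matrix.IsSymm, Matrix.transpose_sum]
    refine Finset.sum_congr rfl fun k _ => ?_
    rw [Matrix.transpose_smul, Matrix.transpose_vecMulVec]
  refine exists_rat_of_sup_quadratic hS (fun i => (c i : ℚ)) fun t => Iff.trans ?_ (hα t)
  refine forall_congr' fun y => ?_
  have hv : ∀ k, (fun i => ((v k i : ℚ) : ℝ)) ⬝ᵥ y = y (ends k).1 - y (ends k).2 := by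
    intro k
    simp [v, dotProduct, sub_mul, Pi.single_apply, Finset.sum_sub_distrib,
      apply_ite (Rat.cast : ℚ → ℝ)]
  have hmap : S.map (Rat.castHom ℝ) = Matrix.diagonal (fun i => (h i : ℝ)) +
      ∑ k, (w k : ℝ) • Matrix.vecMulVec (fun i => ((v k i : ℚ) : ℝ)) (fun i => (v k i : ℝ)) := by
    ext i j
    simp [S, Matrix.sum_apply, Matrix.diagonal_apply, Matrix.vecMulVec_apply, apply_ite]
  have hquad : y ⬝ᵥ (S.map (Rat.castHom ℝ) *ᵥ y) =
      ∑ j, (h j : ℝ) * y j ^ 2 + ∑ k, (w k : ℝ) * (y (ends k).1 - y (ends k).2) ^ 2 := by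
    rw [hmap, Matrix.add_mulVec, dotProduct_add, Matrix.sum_mulVec, dotProduct_sum]
    congr 1
    · refine Finset.sum_congr rfl fun j _ => ?_
      rw [Matrix.mulVec_diagonal]
      ring
    · refine Finset.sum_congr rfl fun k _ => ?_
      rw [Matrix.smul_mulVec, dotProduct_smul, Matrix.vecMulVec_mulVec, hv]
      simp only [dotProduct_smul, smul_eq_mul, MulOpposite.smul_eq_mul_unop,
        MulOpposite.unop_op]
      rw [dotProduct_comm, hv]
      ring
  rw [hquad, modelFunctional, Finset.sum_sub_distrib, ← sub_sub]
  have hlin : 2 * ((fun i => (((c i : ℤ) : ℚ) : ℝ)) ⬝ᵥ y) = ∑ j, 2 * (c j : ℝ) * y j := by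
    simp [dotProduct, Finset.mul_sum, mul_assoc]
  rw [hlin]

end Quadratic

/-! ### Resolution data as networks -/

lemma Finset.sum_filter_lt_add_swap {r : ℕ} {R : Type*} [AddCommMonoid R]
    (g : Fin r → Fin r → R) :
    ∑ q : Fin r × Fin r with q.1 < q.2, (g q.1 q.2 + g q.2 q.1) =
      ∑ i, ∑ j ∈ Finset.univ.erase i, g i j := by
  have h₁ : ∑ q : Fin r × Fin r with q.1 < q.2, g q.2 q.1 =
      ∑ q : Fin r × Fin r with q.2 < q.1, g q.1 q.2 := by
    refine Finset.sum_equiv (Equiv.prodComm _ _) (by simp) (by simp)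
  rw [Finset.sum_add_distrib, h₁, Finset.sum_filter, Finset.sum_filter, ← Finset.sum_add_distrib,
    Fintype.sum_prod_type]
  refine Finset.sum_congr rfl fun i _ => ?_
  rw [← Finset.filter_ne, Finset.sum_filter]
  refine Finset.sum_congr rfl fun j _ => ?_
  rcases lt_trichotomy i j with h | h | h
  · simp [h, h.ne, h.not_gt]
  · simp [h]
  · simp [h, h.ne', h.not_gt]

lemma Multiset.sum_map_sum_replicate {ι β R : Type*} [AddCommMonoid R] (s : Finset ι) (m : ι → ℕ)
    (e : ι → β) (f : β → R) :
    ((∑ q ∈ s, Multiset.replicate (m q) (e q)).map f).sum = ∑ q ∈ s, m q • f (e q) := by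
  classical
  induction s using Finset.induction_on with
  | empty => simp
  | insert a s ha ih => simp [Finset.sum_insert ha, ih]

namespace ResolutionDatum

variable {r : ℕ} (D : ResolutionDatum r)

/-- The integer vector `c i = 2 p i - 2 - M i i`. -/
def cInt (i : Fin r) : ℤ := 2 * (D.p i : ℤ) - 2 - D.M i i

/-- The valency `∑ j ≠ i, M i j` of a vertex. -/
def valency (i : Fin r) : ℤ := ∑ j ∈ Finset.univ.erase i, D.M i j

/-- The row sums of `-M`. -/
def defect (i : Fin r) : ℤ := -D.M i i - D.valency i

/-- The dual graph as a network with edges of length one. -/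
def network : Multiset (Fin r × Fin r × ℕ) :=
  ∑ q : Fin r × Fin r with q.1 < q.2, Multiset.replicate (D.M q.1 q.2).toNat (q.1, q.2, 1)

/-- The quadratic form `-xᵀ M x`. -/
noncomputable def form (x : Fin r → ℝ) : ℝ := -(x ⬝ᵥ (D.M.map (Int.cast : ℤ → ℝ) *ᵥ x))

lemma network_pos : ∀ e ∈ D.network, 0 < e.2.2 := by
  intro e he
  obtain ⟨q, -, hq⟩ := Multiset.mem_sum.1 he
  rw [Multiset.eq_of_mem_replicate hq]
  exact one_pos

lemma M_comm (i j : Fin r) : D.M i j = D.M j i := D.symm.apply j i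

lemma toNat_M {q : Fin r × Fin r} (hq : q.1 < q.2) : ((D.M q.1 q.2).toNat : ℤ) = D.M q.1 q.2 :=
  Int.toNat_of_nonneg (D.offdiag_nonneg _ _ hq.ne)

lemma netDegree_network (v : Fin r) : (netDegree D.network v : ℤ) = D.valency v := by
  have h := Finset.sum_filter_lt_add_swap (fun i j => if i = v then D.M i j else 0)
  have h₂ : ∑ i, ∑ j ∈ Finset.univ.erase i, (if i = v then D.M i j else 0) = D.valency v := by
    rw [Finset.sum_eq_single v (fun i _ hi => by simp [hi]) (by simp)]
    simp [valency]
  rw [netDegree, network, Multiset.sum_map_sum_replicate, ← h₂, ← h]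
  rw [Nat.cast_sum]
  refine Finset.sum_congr rfl fun q hq => ?_
  rw [smul_eq_mul, Nat.cast_mul, D.toNat_M (Finset.mem_filter.1 hq).2, edgeDegree, D.M_comm q.2 q.1]
  push_cast
  split_ifs <;> ring

lemma dotProduct_mulVec_eq (x y : Fin r → ℝ) : x ⬝ᵥ (D.M.map (Int.cast : ℤ → ℝ) *ᵥ y) =
    ∑ i, ((D.M i i : ℝ) * x i * y i + ∑ j ∈ Finset.univ.erase i, (D.M i j : ℝ) * x i * y j) := by
  refine Finset.sum_congr rfl fun i _ => ?_
  rw [Matrix.mulVec, dotProduct, Finset.mul_sum, ← Finset.add_sum_erase _ _ (Finset.mem_univ i)]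
  congr 1
  · simp only [Matrix.map_apply]; ring
  · refine Finset.sum_congr rfl fun j _ => ?_
    simp only [Matrix.map_apply]; ring

lemma form_eq (x : Fin r → ℝ) :
    D.form x = ∑ i, (D.defect i : ℝ) * x i ^ 2 + totalEnergy D.network x := by
  have h := Finset.sum_filter_lt_add_swap (fun i j => (D.M i j : ℝ) * x i * (x i - x j))
  have h₂ : totalEnergy D.network x =
      ∑ i, ∑ j ∈ Finset.univ.erase i, (D.M i j : ℝ) * x i * (x i - x j) := by
    rw [totalEnergy, network, Multiset.sum_map_sum_replicate, ← h]
    refine Finset.sum_congr rfl fun q hq => ?_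
    have : ((D.M q.1 q.2).toNat : ℝ) = D.M q.1 q.2 := by
      exact_mod_cast D.toNat_M (Finset.mem_filter.1 hq).2
    rw [nsmul_eq_mul, this, edgeEnergy, D.M_comm q.2 q.1]
    push_cast
    ring
  rw [form, dotProduct_mulVec_eq, h₂, ← Finset.sum_add_distrib, ← Finset.sum_neg_distrib]
  refine Finset.sum_congr rfl fun i _ => ?_
  have h₃ : ∑ j ∈ Finset.univ.erase i, (D.M i j : ℝ) * x i * (x i - x j) =
      (D.valency i : ℝ) * x i ^ 2 - ∑ j ∈ Finset.univ.erase i, (D.M i j : ℝ) * x i * x j := by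
    rw [valency]
    push_cast
    rw [Finset.sum_mul, ← Finset.sum_sub_distrib]
    refine Finset.sum_congr rfl fun j _ => ?_
    ring
  rw [h₃, defect]
  push_cast
  ring

lemma form_le {x : Fin r → ℝ} (hx : ∀ i, 0 ≤ x i) :
    D.form x ≤ ∑ i, -(D.M i i : ℝ) * x i ^ 2 := by
  rw [form, dotProduct_mulVec_eq, ← Finset.sum_neg_distrib]
  refine Finset.sum_le_sum fun i _ => ?_
  have : 0 ≤ ∑ j ∈ Finset.univ.erase i, (D.M i j : ℝ) * x i * x j := by
    refine Finset.sum_nonneg fun j hj => ?_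
    have : (0 : ℝ) ≤ D.M i j := by
      exact_mod_cast D.offdiag_nonneg i j (Finset.ne_of_mem_erase hj).symm
    exact mul_nonneg (mul_nonneg this (hx i)) (hx j)
  nlinarith

lemma form_pos {x : Fin r → ℝ} (hx : x ≠ 0) : 0 < D.form x :=
  neg_pos.2 (D.negdef x hx)

lemma cInt_nonneg (i : Fin r) : 0 ≤ D.cInt i := by
  have h₁ := D.diag_le_neg_two i
  have h₂ := D.diag_neg i
  unfold cInt
  by_cases h : D.p i = 0
  · have := h₁ h; omega
  · omega

lemma neg_diag_le_cInt_add_two (i : Fin r) : -D.M i i ≤ D.cInt i + 2 := by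
  unfold cInt; omega

lemma neg_diag_le_three_mul_cInt {i : Fin r} (h : D.cInt i ≠ 0) : -D.M i i ≤ 3 * D.cInt i := by
  have h₁ := D.cInt_nonneg i
  have h₂ : D.cInt i = 2 * (D.p i : ℤ) - 2 - D.M i i := rfl
  omega

lemma diag_eq_neg_two {i : Fin r} (h : D.cInt i = 0) : D.M i i = -2 := by
  have h₂ : D.cInt i = 2 * (D.p i : ℤ) - 2 - D.M i i := rfl
  have h₁ := D.diag_neg i
  omega

lemma valency_nonneg (i : Fin r) : 0 ≤ D.valency i :=
  Finset.sum_nonneg fun j hj => D.offdiag_nonneg i j (Finset.ne_of_mem_erase hj).symm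

lemma two_mul_card_le_sum_valency : 2 * (r : ℤ) ≤ ∑ i, D.valency i + 2 := by
  classical
  set G := SimpleGraph.fromRel (fun i j : Fin r => 0 < D.M i j) with hG
  have h₁ := SimpleGraph.Connected.card_vert_le_card_edgeSet_add_one (G := G) D.connected
  have h₂ := G.sum_degrees_eq_twice_card_edges
  rw [Nat.card_eq_fintype_card, Fintype.card_fin, Nat.card_eq_fintype_card,
    ← SimpleGraph.edgeFinset_card] at h₁
  have h₃ : ∀ i, (G.degree i : ℤ) ≤ D.valency i := by
    intro i
    rw [← SimpleGraph.card_neighborFinset_eq_degree, Finset.card_eq_sum_ones, valency]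
    push_cast
    refine (Finset.sum_le_sum (g := fun j => D.M i j) fun j hj => ?_).trans
      (Finset.sum_le_sum_of_subset_of_nonneg (fun j hj => ?_) fun j hj _ =>
        D.offdiag_nonneg i j (Finset.ne_of_mem_erase hj).symm)
    · rw [SimpleGraph.mem_neighborFinset, hG, SimpleGraph.fromRel_adj, D.M_comm j i] at hj
      omega
    · rw [SimpleGraph.mem_neighborFinset] at hj
      exact Finset.mem_erase.2 ⟨hj.ne', Finset.mem_univ _⟩
  have h₄ := Finset.sum_le_sum fun i (_ : i ∈ Finset.univ) => h₃ i
  have h₅ : (∑ i, (G.degree i : ℤ)) = 2 * (G.edgeFinset.card : ℤ) := by exact_mod_cast h₂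
  omega

/-- `-K²` is the supremum of `2 c · x + xᵀ M x`. -/
lemma forall_le_iff_negK2_le (t : ℝ) :
    (∀ x : Fin r → ℝ, 2 * ((fun i => (D.cInt i : ℝ)) ⬝ᵥ x) - D.form x ≤ t) ↔
      (D.negK2 : ℝ) ≤ t := by
  set z : Fin r → ℚ := -((D.M.map (Int.cast : ℤ → ℚ))⁻¹ *ᵥ D.c) with hz
  have hMz : D.M.map (Int.cast : ℤ → ℚ) *ᵥ z = -D.c := by
    rw [hz, Matrix.mulVec_neg, Matrix.mulVec_mulVec,
      Matrix.mul_nonsing_inv _ (isUnit_iff_ne_zero.2 D.det_ne_zero), Matrix.one_mulVec]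
  have hneg : D.negK2 = D.c ⬝ᵥ z := by rw [negK2, hz, dotProduct_neg]
  have hcc : ∀ i, (D.cInt i : ℝ) = ((D.c i : ℚ) : ℝ) := by
    intro i
    simp [cInt, c]
  have hzr : (-D.M.map (Int.cast : ℤ → ℝ)) *ᵥ (fun i => (z i : ℝ)) =
      fun i => (D.cInt i : ℝ) := by
    ext i
    have := congrArg (Rat.cast : ℚ → ℝ) (congrFun hMz i)
    rw [Matrix.neg_mulVec, hcc, Pi.neg_apply, neg_eq_iff_eq_neg]
    simpa [Matrix.mulVec, dotProduct] using this
  have hS : (-D.M.map (Int.cast : ℤ → ℝ)).IsSymm := (D.symm.map _).neg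
  have hform : ∀ x, D.form x = x ⬝ᵥ ((-D.M.map (Int.cast : ℤ → ℝ)) *ᵥ x) := by
    intro x
    rw [form, Matrix.neg_mulVec, dotProduct_neg]
  have hval : (fun i => (D.cInt i : ℝ)) ⬝ᵥ (fun i => (z i : ℝ)) = (D.negK2 : ℝ) := by
    rw [hneg]
    simp [dotProduct, hcc]
  have key : ∀ x, 2 * ((fun i => (D.cInt i : ℝ)) ⬝ᵥ x) - D.form x =
      D.negK2 - D.form (x - fun i => (z i : ℝ)) := by
    intro x
    rw [hform, hform, two_mul_dotProduct_sub_eq hS hzr, hval]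
  constructor
  · intro H
    have := H fun i => (z i : ℝ)
    rw [key] at this
    simpa [form] using this
  · intro H x
    rw [key]
    have : 0 ≤ D.form (x - fun i => (z i : ℝ)) := by
      by_cases h0 : (x - fun i => (z i : ℝ)) = 0
      · simp [h0, form]
      · exact (D.form_pos h0).le
    linarith

lemma netFunctional_network_le_iff (t : ℝ) :
    (∀ x, netFunctional D.defect D.cInt D.network x ≤ t) ↔ (D.negK2 : ℝ) ≤ t := by
  rw [← D.forall_le_iff_negK2_le]
  refine forall_congr' fun x => ?_
  rw [form_eq, netFunctional, Finset.sum_sub_distrib, ← sub_sub, dotProduct, Finset.mul_sum]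
  simp only [mul_assoc]

lemma sum_cInt_le : (∑ i, D.cInt i : ℤ) ≤ 3 * (D.negK2 : ℝ) := by
  have h := (D.forall_le_iff_negK2_le _).2 le_rfl fun i => if D.cInt i = 0 then 0 else 1 / 3
  have h₂ := D.form_le (x := fun i => if D.cInt i = 0 then 0 else 1 / 3)
    fun i => by split_ifs <;> norm_num
  have h₃ : (∑ i, (D.cInt i : ℝ)) / 3 ≤
      2 * ((fun i => (D.cInt i : ℝ)) ⬝ᵥ fun i => if D.cInt i = 0 then 0 else 1 / 3) -
        ∑ i, -(D.M i i : ℝ) * (if D.cInt i = 0 then 0 else 1 / 3) ^ 2 := by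
    rw [dotProduct, Finset.mul_sum, ← Finset.sum_sub_distrib, Finset.sum_div]
    refine Finset.sum_le_sum fun i _ => ?_
    by_cases hi : D.cInt i = 0
    · simp [hi]
    · have : -(D.M i i : ℝ) ≤ 3 * D.cInt i := by exact_mod_cast D.neg_diag_le_three_mul_cInt hi
      simp only [hi, if_false]
      linarith
  push_cast
  linarith

/-- The rational `(-2)`-curves meeting the other curves exactly twice. -/
def chainVertices : Finset (Fin r) := {i | D.cInt i = 0 ∧ D.valency i = 2}

/-- The rational `(-2)`-curves meeting the other curves at most once. -/
def leaves : Finset (Fin r) := {i | D.cInt i = 0 ∧ D.valency i ≤ 1}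

lemma form_one : D.form 1 = ∑ i, (D.defect i : ℝ) := by
  rw [form_eq]
  have : totalEnergy D.network (1 : Fin r → ℝ) = 0 := by
    refine Multiset.sum_eq_zero fun s hs => ?_
    obtain ⟨e, -, rfl⟩ := Multiset.mem_map.1 hs
    simp [edgeEnergy]
  simp [this]

lemma sum_defect_pos (hr : 0 < r) : 0 < ∑ i, D.defect i := by
  have : Nonempty (Fin r) := ⟨⟨0, hr⟩⟩
  have := D.form_pos (x := 1) one_ne_zero
  rw [form_one] at this
  exact_mod_cast this

lemma sum_defect_le : ∑ i, D.defect i ≤ ∑ i, D.cInt i + 2 := by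
  have h₁ := D.two_mul_card_le_sum_valency
  have h₂ : ∑ i, D.defect i ≤ ∑ i, (D.cInt i + 2 - D.valency i) :=
    Finset.sum_le_sum fun i _ => sub_le_sub_right (D.neg_diag_le_cInt_add_two i) _
  simp only [Finset.sum_sub_distrib, Finset.sum_add_distrib, Finset.sum_const, Finset.card_univ,
    Fintype.card_fin, nsmul_eq_mul] at h₂
  linarith

lemma card_leaves_le (hr : 0 < r) : (D.leaves.card : ℤ) ≤ 2 * ∑ i, D.cInt i + 4 := by
  set u : Fin r → ℝ := fun i => if i ∈ D.leaves then 1 else 0 with hu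
  have hu₀ : ∀ i, 0 ≤ u i := fun i => by simp only [hu]; split_ifs <;> norm_num
  have hx : (1 - (1 / 2 : ℝ) • u) ≠ 0 := by
    intro h
    have := congrFun h ⟨0, hr⟩
    simp only [hu, Pi.sub_apply, Pi.one_apply, Pi.smul_apply, smul_eq_mul, Pi.zero_apply] at this
    split_ifs at this <;> norm_num at this
  have h₁ := D.form_pos hx
  have hcross : -(u ⬝ᵥ (D.M.map (Int.cast : ℤ → ℝ) *ᵥ 1)) = ∑ i, (D.defect i : ℝ) * u i := by
    rw [dotProduct_mulVec_eq, ← Finset.sum_neg_distrib]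
    refine Finset.sum_congr rfl fun i _ => ?_
    simp only [defect, valency, Pi.one_apply, mul_one]
    push_cast
    rw [← Finset.sum_mul]
    ring
  have hcross' : (1 : Fin r → ℝ) ⬝ᵥ (D.M.map (Int.cast : ℤ → ℝ) *ᵥ u) =
      u ⬝ᵥ (D.M.map (Int.cast : ℤ → ℝ) *ᵥ 1) := by
    rw [Matrix.dotProduct_mulVec, ← Matrix.mulVec_transpose, (D.symm.map _).eq, dotProduct_comm]
  have h₂ : D.form (1 - (1 / 2 : ℝ) • u) =
      D.form 1 - ∑ i, (D.defect i : ℝ) * u i + 1 / 4 * D.form u := by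
    rw [← hcross]
    simp only [form, Matrix.mulVec_sub, Matrix.mulVec_smul, dotProduct_sub, sub_dotProduct,
      smul_dotProduct, dotProduct_smul, hcross', smul_eq_mul]
    ring
  have h₃ := D.form_le hu₀
  have h₄ : (D.leaves.card : ℝ) / 2 ≤
      ∑ i, (D.defect i : ℝ) * u i - 1 / 4 * ∑ i, -(D.M i i : ℝ) * u i ^ 2 := by
    have : (D.leaves.card : ℝ) = ∑ i, u i := by simp [hu]
    rw [this, Finset.sum_div, Finset.mul_sum, ← Finset.sum_sub_distrib]
    refine Finset.sum_le_sum fun i _ => ?_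
    by_cases hi : i ∈ D.leaves
    · obtain ⟨hc, hv⟩ := (Finset.mem_filter.1 hi).2
      have hM := D.diag_eq_neg_two hc
      have hd : (1 : ℝ) ≤ D.defect i := by
        have : 1 ≤ D.defect i := by unfold defect; omega
        exact_mod_cast this
      simp only [hu, hi, if_true, hM]
      push_cast
      linarith
    · simp [hu, hi]
  have h₅ : (∑ i, (D.defect i : ℝ)) ≤ ∑ i, (D.cInt i : ℝ) + 2 := by exact_mod_cast D.sum_defect_le
  rw [form_one] at h₂
  have : (D.leaves.card : ℝ) ≤ 2 * ∑ i, (D.cInt i : ℝ) + 4 := by linarith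
  exact_mod_cast this

lemma card_compl_chainVertices_le (hr : 0 < r) :
    (D.chainVerticesᶜ.card : ℤ) ≤ 10 * ∑ i, D.cInt i + 12 := by
  have h : ∑ i, (if i ∈ D.chainVerticesᶜ then (1 : ℤ) else 0) ≤
      ∑ i, (-D.defect i + 3 * (if i ∈ D.leaves then (1 : ℤ) else 0) + 4 * D.cInt i) := by
    refine Finset.sum_le_sum fun i _ => ?_
    have h₁ := D.cInt_nonneg i
    have h₂ := D.valency_nonneg i
    by_cases hc : D.cInt i = 0
    · have := D.diag_eq_neg_two hc
      simp only [chainVertices, leaves, defect, Finset.mem_compl, Finset.mem_filter,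
        Finset.mem_univ, true_and, hc]
      split_ifs <;> omega
    · have := D.neg_diag_le_three_mul_cInt hc
      simp only [chainVertices, leaves, defect, Finset.mem_compl, Finset.mem_filter,
        Finset.mem_univ, true_and, hc, false_and, not_false_eq_true, if_true, if_false]
      omega
  simp only [Finset.sum_add_distrib, ← Finset.mul_sum, Finset.sum_neg_distrib,
    Finset.sum_ite_mem, Finset.univ_inter, Finset.sum_const, nsmul_eq_mul, mul_one] at h
  have h₁ := D.card_leaves_le hr
  have h₂ := D.sum_defect_pos hr
  linarith

lemma sum_valency_compl_le (hr : 0 < r) :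
    ∑ i ∈ D.chainVerticesᶜ, D.valency i ≤ 21 * ∑ i, D.cInt i + 24 := by
  have h : ∑ i, (if i ∈ D.chainVerticesᶜ then D.valency i else 0) ≤
      ∑ i, (-D.defect i + D.cInt i + 2 * (if i ∈ D.chainVerticesᶜ then (1 : ℤ) else 0)) := by
    refine Finset.sum_le_sum fun i _ => ?_
    by_cases hi : i ∈ D.chainVertices
    · obtain ⟨hc, hv⟩ := (Finset.mem_filter.1 hi).2
      have := D.diag_eq_neg_two hc
      simp [hi, defect, hc, hv, this]
    · have := D.neg_diag_le_cInt_add_two i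
      simp only [defect, Finset.mem_compl, hi, not_false_eq_true, if_true]
      omega
  simp only [Finset.sum_add_distrib, ← Finset.mul_sum, Finset.sum_neg_distrib,
    Finset.sum_ite_mem, Finset.univ_inter, Finset.sum_const, nsmul_eq_mul, mul_one] at h
  have h₁ := D.card_compl_chainVertices_le hr
  have h₂ := D.sum_defect_pos hr
  linarith

lemma sum_abs_defect_le (hr : 0 < r) : ∑ i, |D.defect i| ≤ 42 * ∑ i, D.cInt i + 48 := by
  have h : ∑ i, |D.defect i| ≤ ∑ i, (D.cInt i + 2 * (if i ∈ D.chainVerticesᶜ then (1 : ℤ) else 0)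
      + (if i ∈ D.chainVerticesᶜ then D.valency i else 0)) := by
    refine Finset.sum_le_sum fun i _ => ?_
    by_cases hi : i ∈ D.chainVertices
    · obtain ⟨hc, hv⟩ := (Finset.mem_filter.1 hi).2
      have := D.diag_eq_neg_two hc
      simp [hi, defect, hc, hv, this]
    · have h₁ := D.neg_diag_le_cInt_add_two i
      have h₂ := D.diag_neg i
      have h₃ := D.valency_nonneg i
      simp only [defect, Finset.mem_compl, hi, not_false_eq_true, if_true]
      rw [abs_le]
      constructor <;> omega
  simp only [Finset.sum_add_distrib, ← Finset.mul_sum,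
    Finset.sum_ite_mem, Finset.univ_inter, Finset.sum_const, nsmul_eq_mul, mul_one] at h
  have h₁ := D.card_compl_chainVertices_le hr
  have h₂ := D.sum_valency_compl_le hr
  linarith

/-- Every resolution datum with `-K²` at most `σ / 3` has the same value as a model whose size is
bounded in terms of `σ`. -/
lemma exists_model_negK2 (hr : 0 < r) {σ : ℕ} (hσ : 3 * (D.negK2 : ℝ) ≤ σ) {n : ℕ}
    (hn : n = 42 * σ + 48) :
    ∃ (h c : Fin n → ℤ) (ends : Fin n → Fin n × Fin n) (N : Fin n → ℕ),
      (∀ j, |h j| ≤ n) ∧ (∀ j, |c j| ≤ n) ∧ (∀ k, 0 < N k) ∧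
      ∀ t : ℝ, (∀ y, modelFunctional h c ends (fun k => (N k : ℝ)⁻¹) y ≤ t) ↔
        (D.negK2 : ℝ) ≤ t := by
  have hc : ∑ i, D.cInt i ≤ σ := by exact_mod_cast D.sum_cInt_le.trans hσ
  have h₁ := D.card_compl_chainVertices_le hr
  have h₂ := D.sum_valency_compl_le hr
  have h₃ := D.sum_abs_defect_le hr
  have hchain : ∀ v ∈ D.chainVertices,
      D.defect v = 0 ∧ D.cInt v = 0 ∧ netDegree D.network v = 2 := by
    intro v hv
    obtain ⟨hcv, hvv⟩ := (Finset.mem_filter.1 hv).2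
    refine ⟨?_, hcv, ?_⟩
    · rw [defect, D.diag_eq_neg_two hcv, hvv]; norm_num
    · have := D.netDegree_network v
      omega
  obtain ⟨L, hpos, hz, hd, hiff⟩ := exists_eliminate_finset D.chainVertices hchain D.network_pos
  have hcardL : 2 * (Multiset.card L : ℤ) = ∑ i ∈ D.chainVerticesᶜ, D.valency i := by
    have h := sum_netDegree L
    rw [← Finset.sum_add_sum_compl D.chainVertices, Finset.sum_eq_zero hz, zero_add] at h
    have h' : 2 * (Multiset.card L : ℤ) = ∑ i ∈ D.chainVerticesᶜ, (netDegree L i : ℤ) := by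
      exact_mod_cast h.symm
    rw [h']
    refine Finset.sum_congr rfl fun i hi => ?_
    rw [hd i (Finset.mem_compl.1 hi), netDegree_network]
  obtain ⟨h', c', ends, N, hh, hcc, hN, hiff'⟩ := exists_model (n := n) (by omega)
    (L := L) D.chainVertices (fun v hv => ⟨(hchain v hv).1, (hchain v hv).2.1, hz v hv⟩) hpos
    (by omega) (by omega) (by omega)
    (by simp only [abs_of_nonneg (D.cInt_nonneg _)]; omega)
  refine ⟨h', c', ends, N, hh, hcc, hN, fun t => ?_⟩
  rw [← hiff', ← hiff, netFunctional_network_le_iff]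

end ResolutionDatum

/-! ### Accumulation points -/

lemma exists_rat_tendsto_inv {f : ℕ → ℕ} (hf : Monotone f) (hpos : ∀ k, 0 < f k) :
    ∃ q : ℚ, (∀ k, (q : ℝ) ≤ (f k : ℝ)⁻¹) ∧
      Filter.Tendsto (fun k => (f k : ℝ)⁻¹) Filter.atTop (nhds (q : ℝ)) := by
  rcases tendsto_atTop_of_monotone hf with h | ⟨l, hl⟩
  · refine ⟨0, fun k => by rw [Rat.cast_zero]; positivity, ?_⟩
    rw [Rat.cast_zero]
    exact tendsto_inv_atTop_zero.comp (tendsto_natCast_atTop_atTop.comp h)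
  · have hle : ∀ k, f k ≤ l := fun k => hf.ge_of_tendsto hl k
    have hl0 : 0 < l := (hpos 0).trans_le (hle 0)
    refine ⟨(l : ℚ)⁻¹, fun k => ?_, ?_⟩
    · push_cast
      exact inv_anti₀ (by exact_mod_cast hpos k) (by exact_mod_cast hle k)
    · push_cast
      refine Filter.Tendsto.inv₀ ?_ (by exact_mod_cast hl0.ne')
      exact (continuous_of_discreteTopology (f := (Nat.cast : ℕ → ℝ))).continuousAt.tendsto.comp hl

lemma modelFunctional_anti {n : ℕ} {h c : Fin n → ℤ} {ends : Fin n → Fin n × Fin n}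
    {w w' : Fin n → ℝ} (hw : ∀ k, w k ≤ w' k) (y : Fin n → ℝ) :
    modelFunctional h c ends w' y ≤ modelFunctional h c ends w y :=
  sub_le_sub_left
    (Finset.sum_le_sum fun k _ => mul_le_mul_of_nonneg_right (hw k) (sq_nonneg _)) _

lemma exists_strictMono_const {X : Type*} [Finite X] (f : ℕ → X) :
    ∃ (x : X) (g : ℕ → ℕ), StrictMono g ∧ ∀ k, f (g k) = x := by
  obtain ⟨x, hx⟩ := Finite.exists_infinite_fiber f
  have hfreq := Nat.frequently_atTop_iff_infinite.2 (Set.infinite_coe_iff.1 hx)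
  obtain ⟨g, hg, hgx⟩ := Filter.extraction_of_frequently_atTop hfreq
  exact ⟨x, g, hg, hgx⟩

/-- A limit from below of suprema of models of bounded size is rational. -/
lemma exists_rat_of_tendsto_model {n : ℕ} {h c : ℕ → Fin n → ℤ}
    {ends : ℕ → Fin n → Fin n × Fin n} {N : ℕ → Fin n → ℕ} {s : ℕ → ℝ} {α : ℝ}
    (hh : ∀ m j, |h m j| ≤ n) (hc : ∀ m j, |c m j| ≤ n) (hN : ∀ m k, 0 < N m k)
    (hs : ∀ m (t : ℝ), (∀ y, modelFunctional (h m) (c m) (ends m) (fun k => (N m k : ℝ)⁻¹) y ≤ t) ↔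
      s m ≤ t)
    (hlt : ∀ m, s m ≤ α) (hlim : Filter.Tendsto s Filter.atTop (nhds α)) :
    ∃ q : ℚ, α = (q : ℝ) := by
  obtain ⟨⟨h₀, c₀, e₀⟩, g, hg, hgx⟩ := exists_strictMono_const
    (X := (Fin n → Set.Icc (-(n : ℤ)) n) × (Fin n → Set.Icc (-(n : ℤ)) n) × (Fin n → Fin n × Fin n))
    fun m => (fun j => ⟨h m j, abs_le.1 (hh m j)⟩, fun j => ⟨c m j, abs_le.1 (hc m j)⟩, ends m)
  simp only [Prod.mk.injEq] at hgx
  obtain ⟨g', hg'⟩ := (wellQuasiOrdered_le (α := Fin n → ℕ)).exists_monotone_subseq fun m => N (g m)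
  choose w hw hwlim using fun k : Fin n =>
    exists_rat_tendsto_inv (f := fun m => N (g (g' m)) k)
      (fun a b hab => hg' a b hab k) fun m => hN _ k
  have hs' : ∀ m (t : ℝ), (∀ y, modelFunctional (fun j => (h₀ j : ℤ)) (fun j => (c₀ j : ℤ)) e₀
      (fun k => (N (g (g' m)) k : ℝ)⁻¹) y ≤ t) ↔ s (g (g' m)) ≤ t := by
    intro m t
    rw [← hs]
    obtain ⟨h₁, h₂, h₃⟩ := hgx (g' m)
    rw [← h₁, ← h₂, ← h₃]
  have hlim' : Filter.Tendsto (fun m => s (g (g' m))) Filter.atTop (nhds α) :=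
    hlim.comp (hg.tendsto_atTop.comp g'.strictMono.tendsto_atTop)
  refine exists_rat_of_sup_model w (h := fun j => h₀ j) (c := fun j => c₀ j) (ends := e₀)
    fun t => ⟨fun H => ?_, fun H y => ?_⟩
  · exact le_of_tendsto' hlim' fun m =>
      (hs' m t).1 fun y => (modelFunctional_anti (fun k => hw k m) y).trans (H y)
  · refine le_trans (le_of_tendsto' (x := Filter.atTop) (f := fun m =>
      modelFunctional (fun j => (h₀ j : ℤ))
      (fun j => (c₀ j : ℤ)) e₀ (fun k => (N (g (g' m)) k : ℝ)⁻¹) y) ?_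
      fun m => ((hs' m _).2 le_rfl y).trans (hlt _)) H
    exact tendsto_const_nhds.sub (tendsto_finsetSum _ fun k _ => (hwlim k).mul_const _)

/-- **Theorem 2.3.** Every accumulation point from below of the set of values `-K²` of normal
surface singularities is rational. -/
theorem negK2Set_accumulation_from_below_rational (α : ℝ)
    (hα : ∀ ε : ℝ, 0 < ε → ∃ s ∈ negK2Set, α - ε < s ∧ s < α) :
    ∃ q : ℚ, α = (q : ℝ) := by
  choose s hsS hlow hlt using fun m : ℕ => hα (1 / ((m : ℝ) + 1)) Nat.one_div_pos_of_nat
  choose r hr D hD using hsS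
  obtain ⟨σ, hσ⟩ := exists_nat_ge (3 * α)
  choose h c ends N hh hc hN hiff using fun m => (D m).exists_model_negK2 (hr m) (σ := σ)
    (by rw [← hD]; linarith [hlt m]) rfl
  refine exists_rat_of_tendsto_model hh hc hN (fun m t => by rw [hiff, hD]) (fun m => (hlt m).le) ?_
  refine tendsto_of_tendsto_of_tendsto_of_le_of_le ?_ tendsto_const_nhds (fun m => (hlow m).le)
    fun m => (hlt m).le
  simpa using tendsto_const_nhds.sub (tendsto_one_div_add_atTop_nhds_zero_nat (𝕜 := ℝ))
end

section
/- For every rational number q there exists an integer z such that z + q is an accumulation point of S, i.e., for every ε > 0 there exists s ∈ S with s ≠ z + q and |s - (z + q)| < ε. -/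
open Matrix

/-- Multiplicity of the edge from vertex `i` to vertex `i + 1`: the first edge is double. -/
def chainWeight (i : ℕ) : ℤ := if i = 0 then 2 else 1

/-- Intersection numbers of a curve of self-intersection `-(m + 4)`, met doubly by the first curve
of a chain of `(-2)`-curves. -/
def chainEntry (m i j : ℕ) : ℤ :=
  (if j = i then (if i = 0 then -((m : ℤ) + 4) else -2) else 0) +
    (if j = i + 1 then chainWeight i else 0) + (if i = j + 1 then chainWeight j else 0)

/-- The intersection matrix with entries `chainEntry m`, the chain having `n` curves. -/
def chainMatrix (m n : ℕ) : Matrix (Fin (n + 1)) (Fin (n + 1)) ℤ :=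
  Matrix.of fun i j => chainEntry m i j

/-- The contribution of the left neighbour to row `i` of `chainMatrix` applied to `X`. -/
def chainPrev {K : Type*} [Ring K] (X : ℕ → K) : ℕ → K
  | 0 => 0
  | i + 1 => (chainWeight i : K) * X i

/-- Row `i` of `chainMatrix` applied to `X`. -/
def chainRow {K : Type*} [Ring K] (m : ℕ) (X : ℕ → K) (i : ℕ) : K :=
  (if i = 0 then -((m : K) + 4) else -2) * X i + (chainWeight i : K) * X (i + 1) + chainPrev X i

theorem chainMatrix_mulVec {K : Type*} [Ring K] (m n : ℕ) (X : ℕ → K) (hX : X (n + 1) = 0)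
    (i : Fin (n + 1)) :
    ((chainMatrix m n).map (Int.cast : ℤ → K) *ᵥ fun j => X j) i = chainRow m X i := by
  obtain ⟨i, hi⟩ := i
  have hsum : ((chainMatrix m n).map (Int.cast : ℤ → K) *ᵥ fun j => X j) ⟨i, hi⟩ =
      ∑ j ∈ Finset.range (n + 1), (chainEntry m i j : K) * X j := by
    rw [Finset.sum_range]
    rfl
  rw [hsum]
  simp only [chainEntry, Int.cast_add, add_mul, Finset.sum_add_distrib, Int.cast_ite, ite_mul,
    Int.cast_zero, zero_mul, Finset.sum_ite_eq', Finset.mem_range, chainRow, hi, if_true]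
  congr 1
  · congr 1
    · split_ifs <;> simp
    · split_ifs with h
      · rfl
      · obtain rfl : i = n := by omega
        simp [hX]
  · cases i with
    | zero => simp [chainPrev]
    | succ k =>
      have hk : k < n + 1 := by omega
      simp [chainPrev, hk]

theorem sum_mul_chainRow {K : Type*} [CommRing K] (m n : ℕ) (X : ℕ → K) :
    ∑ i ∈ Finset.range (n + 1), X i * chainRow m X i =
      -(m * X 0 ^ 2 + ∑ i ∈ Finset.range (n + 1), ((chainWeight i : K) * X i - X (i + 1)) ^ 2) +
        X (n + 1) ^ 2 - chainWeight n * X n * X (n + 1) := by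
  induction n with
  | zero =>
    simp [chainRow, chainPrev, chainWeight]
    ring
  | succ n ih =>
    rw [Finset.sum_range_succ, ih, Finset.sum_range_succ _ (n + 1)]
    simp only [chainRow, chainPrev, if_neg n.succ_ne_zero,
      show chainWeight (n + 1) = 1 from rfl, Int.cast_one]
    ring

theorem chainMatrix_neg {K : Type*} [Field K] [LinearOrder K] [IsStrictOrderedRing K]
    (m n : ℕ) (hm : 0 < m) (x : Fin (n + 1) → K) (hx : x ≠ 0) :
    x ⬝ᵥ ((chainMatrix m n).map (Int.cast : ℤ → K) *ᵥ x) < 0 := by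
  set X : ℕ → K := fun i => if h : i < n + 1 then x ⟨i, h⟩ else 0 with hXdef
  have hXn : X (n + 1) = 0 := by simp [hXdef]
  have hxX : x = fun i : Fin (n + 1) => X i := by
    ext i
    simp only [hXdef, i.2, dif_pos]
  have hform : x ⬝ᵥ ((chainMatrix m n).map (Int.cast : ℤ → K) *ᵥ x) =
      ∑ i ∈ Finset.range (n + 1), X i * chainRow m X i := by
    rw [hxX, Finset.sum_range, dotProduct]
    exact Finset.sum_congr rfl fun i _ => by rw [chainMatrix_mulVec m n X hXn]
  rw [hform, sum_mul_chainRow, hXn]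
  have hm' : (0 : K) < m := by exact_mod_cast hm
  have hsq : 0 ≤ (m : K) * X 0 ^ 2 := by positivity
  have hnonneg : ∀ i ∈ Finset.range (n + 1), 0 ≤ ((chainWeight i : K) * X i - X (i + 1)) ^ 2 :=
    fun i _ => sq_nonneg _
  have hsum := Finset.sum_nonneg hnonneg
  by_contra! hcon
  have hX0 : X 0 = 0 := by
    have h : (m : K) * X 0 ^ 2 = 0 := by linarith
    simpa [hm'.ne'] using h
  have hdiff := (Finset.sum_eq_zero_iff_of_nonneg hnonneg).1 (by linarith)
  have hzero : ∀ i, i < n + 1 → X i = 0 := by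
    intro i
    induction i with
    | zero => exact fun _ => hX0
    | succ k ih =>
      intro hk
      have h := hdiff k (Finset.mem_range.2 (by omega))
      rw [ih (by omega)] at h
      simpa using h
  exact hx (hxX.trans (funext fun i => hzero i i.2))

theorem chainMatrix_connected (m n : ℕ) :
    (SimpleGraph.fromRel fun i j : Fin (n + 1) => 0 < chainMatrix m n i j).Connected := by
  have hreach : ∀ (k : ℕ) (hk : k < n + 1),
      (SimpleGraph.fromRel fun i j : Fin (n + 1) => 0 < chainMatrix m n i j).Reachable 0
        ⟨k, hk⟩ := by
    intro k
    induction k with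
    | zero => exact fun _ => SimpleGraph.Reachable.refl _
    | succ k ih =>
      intro hk
      refine (ih (by omega)).trans (SimpleGraph.Adj.reachable ?_)
      rw [SimpleGraph.fromRel_adj]
      refine ⟨by simp, Or.inl ?_⟩
      simp only [chainMatrix, Matrix.of_apply, chainEntry, chainWeight]
      split_ifs <;> omega
  exact ⟨fun i j => (hreach i i.2).symm.trans (hreach j j.2)⟩

/-- A curve of genus `g` and self-intersection `-(m + 4)`, met doubly by the first curve of a chain
of `n` rational `(-2)`-curves. -/
def chainDatum (m n g : ℕ) (hm : 0 < m) : ResolutionDatum (n + 1) where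
  M := chainMatrix m n
  p i := if i = 0 then g else 0
  symm := by
    ext i j
    simp only [chainMatrix, Matrix.transpose_apply, Matrix.of_apply, chainEntry]
    split_ifs <;> omega
  negdef := chainMatrix_neg m n hm
  offdiag_nonneg i j hij := by
    have hij' : (j : ℕ) ≠ i := fun h => hij (Fin.ext h.symm)
    simp only [chainMatrix, Matrix.of_apply, chainEntry, chainWeight]
    split_ifs <;> omega
  diag_le_neg_two i _ := by
    simp only [chainMatrix, Matrix.of_apply, chainEntry]
    split_ifs <;> omega
  connected := chainMatrix_connected m n

theorem chainDatum_c (m n g : ℕ) (hm : 0 < m) (i : Fin (n + 1)) :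
    (chainDatum m n g hm).c i = if (i : ℕ) = 0 then 2 * (g : ℚ) + 2 + m else 0 := by
  have hi : i = 0 ↔ (i : ℕ) = 0 := Fin.ext_iff
  simp only [ResolutionDatum.c, chainDatum, chainMatrix, Matrix.of_apply, chainEntry, hi]
  split_ifs <;> first | omega | (push_cast; ring)

theorem chainDatum_negK2 (m n g : ℕ) (hm : 0 < m) :
    (chainDatum m n g hm).negK2 = (2 * (g : ℚ) + 2 + m) ^ 2 / (m + 4 / (n + 1)) := by
  set C : ℚ := 2 * (g : ℚ) + 2 + m with hC
  have hden : (m : ℚ) + 4 / (n + 1) ≠ 0 := by positivity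
  have hn : (n : ℚ) + 1 ≠ 0 := by positivity
  set y : ℚ := -C / (m + 4 / (n + 1)) with hy
  set Y : ℕ → ℚ := fun i => (if i = 0 then 1 else 2) * y * ((n + 1 - i) / (n + 1)) with hY
  have hYn : Y (n + 1) = 0 := by simp [hY]
  have hmul : (chainMatrix m n).map (Int.cast : ℤ → ℚ) *ᵥ (fun j => Y j) =
      (chainDatum m n g hm).c := by
    ext ⟨i, hi⟩
    rw [chainMatrix_mulVec m n Y hYn, chainDatum_c]
    rcases i with _ | _ | k
    · have hrow : y * (m + 4 / (n + 1)) = -C := div_mul_cancel₀ _ hden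
      simp [chainRow, chainPrev, chainWeight, hY]
      rw [← hC, ← neg_eq_iff_eq_neg.2 hrow]
      field_simp
      ring
    · simp [chainRow, chainPrev, chainWeight, hY]
      field_simp
      ring
    · simp [chainRow, chainPrev, chainWeight, hY]
      field_simp
      ring
  have hdet : IsUnit ((chainMatrix m n).map (Int.cast : ℤ → ℚ)).det := by
    rw [isUnit_iff_ne_zero]
    intro h
    obtain ⟨v, hv, hv0⟩ := Matrix.exists_mulVec_eq_zero_iff.2 h
    have hneg := chainMatrix_neg (K := ℚ) m n hm v hv
    rw [hv0, dotProduct_zero] at hneg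
    exact hneg.false
  have hinv : ((chainDatum m n g hm).M.map (Int.cast : ℤ → ℚ))⁻¹ *ᵥ (chainDatum m n g hm).c =
      fun j : Fin (n + 1) => Y j := by
    rw [← hmul, Matrix.mulVec_mulVec]
    change (((chainMatrix m n).map (Int.cast : ℤ → ℚ))⁻¹ * _) *ᵥ _ = _
    rw [Matrix.nonsing_inv_mul _ hdet, Matrix.one_mulVec]
  rw [ResolutionDatum.negK2, hinv, dotProduct, Fin.sum_univ_succ]
  simp [chainDatum_c, hY, ← hC, hy, hn]
  ring

/-- **Proposition 2.4.** Every rational number is an accumulation point of `{-K²}` modulo `ℤ`. -/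
theorem negK2Set_accumulation_mod_int (q : ℚ) :
    ∃ z : ℤ, ∀ ε : ℝ, 0 < ε →
      ∃ s ∈ negK2Set, s ≠ (z : ℝ) + (q : ℝ) ∧ |s - ((z : ℝ) + (q : ℝ))| < ε := by
  obtain ⟨v, hv, u, hu, k, hq⟩ : ∃ v : ℕ, 0 < v ∧ ∃ u : ℕ, 0 < u ∧ ∃ k : ℤ,
      (q : ℝ) = (u : ℝ) / v - k := by
    have hd : (0 : ℤ) < q.den := by exact_mod_cast q.den_pos
    have hpos : 0 < q.num + (|q.num| + 1) * q.den := by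
      nlinarith [neg_abs_le q.num, abs_nonneg q.num]
    obtain ⟨u, hu⟩ := Int.eq_ofNat_of_zero_le hpos.le
    refine ⟨q.den, q.den_pos, u, by omega, |q.num| + 1, ?_⟩
    have hu' : (u : ℝ) = q.num + ((|q.num| + 1 : ℤ) : ℝ) * q.den := by exact_mod_cast hu.symm
    have hd' : (q.den : ℝ) ≠ 0 := by exact_mod_cast hd.ne'
    rw [hu', add_div, mul_div_cancel_right₀ _ hd', add_sub_cancel_right]
    exact Rat.cast_def q
  have hu' : (0 : ℝ) < u := by exact_mod_cast hu
  have hv' : (0 : ℝ) < v := by exact_mod_cast hv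
  have hm : 0 < 4 * u * v := by positivity
  refine ⟨k + 4 * u + 4 * u * v, fun ε hε => ?_⟩
  set C : ℝ := 2 * u + 4 * u * v with hC
  have hCpos : 0 < C := by positivity
  have hlim : ((k + 4 * u + 4 * u * v : ℤ) : ℝ) + q = C ^ 2 / (4 * u * v) := by
    rw [hq, hC]
    push_cast
    field_simp
    ring
  have hval : ∀ n : ℕ, (((chainDatum (4 * u * v) n (u - 1) hm).negK2 : ℚ) : ℝ) =
      C ^ 2 / (4 * u * v + 4 / (n + 1)) := by
    intro n
    rw [chainDatum_negK2, hC]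
    push_cast [Nat.cast_sub (show 1 ≤ u from hu)]
    ring_nf
  have htend : Filter.Tendsto (fun n : ℕ => C ^ 2 / (4 * u * v + 4 / ((n : ℝ) + 1)))
      Filter.atTop (nhds (C ^ 2 / (4 * u * v))) := by
    have h : Filter.Tendsto (fun n : ℕ => 4 * (u : ℝ) * v + 4 * (1 / ((n : ℝ) + 1)))
        Filter.atTop (nhds (4 * u * v + 4 * 0)) :=
      (tendsto_one_div_add_atTop_nhds_zero_nat.const_mul 4).const_add _
    simp only [mul_one_div, mul_zero, add_zero] at h
    exact tendsto_const_nhds.div h (by positivity)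
  obtain ⟨n, hn⟩ := (Metric.tendsto_nhds.1 htend ε hε).exists
  refine ⟨_, ⟨n + 1, n.succ_pos, chainDatum (4 * u * v) n (u - 1) hm, rfl⟩, ?_, ?_⟩
  · rw [hlim, hval]
    refine ne_of_lt (div_lt_div_of_pos_left (by positivity) (by positivity) ?_)
    exact lt_add_of_pos_right _ (by positivity)
  · rw [hlim, hval]
    exact hn
end
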